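/- arXiv:1307.2893 — 2 statements merged into one kernel-verified Lean document; each statement's English description precedes it below -/
import Mathlib

section
/- In the N-type linear model (p_u^i = u^i/m for all u and all i ∈ [N]) with X_0^i > 0 for all i ∈ [N], the process {a_n} converges almost surely; moreover the limiting distribution has full support on the probability simplex Δ^N and has no atoms. -/
open MeasureTheory ProbabilityTheory Filter Set

noncomputable section

/-- The vector field `P(y)^i = (1/2) ∑_u (m choose u) y^u (p_u^i − u^i/m)`, where the sum
ranges over all `u : Fin N → ℕ` with `∑ i, u i = m`. -/
def vecFieldP (N m : ℕ) (p : (Fin N → ℕ) → Fin N → ℝ) (y : Fin N → ℝ) : Fin N → ℝ :=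
  fun i => (1 / 2) * ∑ u ∈ Finset.Nat.antidiagonalTuple N m,
    (Nat.multinomial Finset.univ u : ℝ) * (∏ j, y j ^ u j) * (p u i - (u i : ℝ) / m)

/-- The zero set `Z_P = {y ∈ Δ^N : P(y) = 0}` of the vector field on the probability
simplex. -/
def zeroSetVecP (N m : ℕ) (p : (Fin N → ℕ) → Fin N → ℝ) : Set (Fin N → ℝ) :=
  {y ∈ stdSimplex ℝ (Fin N) | vecFieldP N m p y = 0}

/-- The `N`-type preferential attachment process with `m` edges per new node and type
adoption parameters `p u i` (for `u : Fin N → ℕ` with `∑ i, u i = m`), defined on a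
probability space `(Ω, μ)` with filtration `F`.  `A n i` is the number of type-`i` nodes and
`X n i` the sum of the degrees of type-`i` nodes at time `n`; the transition given `F n` is:
a vector `u` is drawn from the `Multinomial(m, x_n)` distribution, an index `i` is drawn from
the distribution `p_u`, and then `A_{n+1} = A_n + δ^i`, `X_{n+1} = X_n + u + m δ^i`. -/
structure NPAProcess (Ω : Type) [MeasurableSpace Ω] where
  μ : Measure Ω
  isProb : IsProbabilityMeasure μ
  N : ℕ
  m : ℕ
  hN : 2 ≤ N
  hm : 1 ≤ m
  p : (Fin N → ℕ) → Fin N → ℝ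
  hp_nonneg : ∀ u ∈ Finset.Nat.antidiagonalTuple N m, ∀ i, 0 ≤ p u i
  hp_sum : ∀ u ∈ Finset.Nat.antidiagonalTuple N m, ∑ i, p u i = 1
  A : ℕ → Ω → Fin N → ℕ
  X : ℕ → Ω → Fin N → ℕ
  F : Filtration ℕ ‹MeasurableSpace Ω›
  A0 : Fin N → ℕ
  X0 : Fin N → ℕ
  hA0 : ∀ ω, A 0 ω = A0
  hX0 : ∀ ω, X 0 ω = X0
  adaptedA : ∀ n, Measurable[F n] (A n)
  adaptedX : ∀ n, Measurable[F n] (X n)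
  hXsum : ∀ n ω, ∑ i, X n ω i = ∑ i, X0 i + 2 * m * n
  step : ∀ n : ℕ, ∀ u ∈ Finset.Nat.antidiagonalTuple N m, ∀ i : Fin N,
    μ[Set.indicator
        {ω | (∀ j, A (n + 1) ω j = A n ω j + if j = i then 1 else 0) ∧
             (∀ j, X (n + 1) ω j = X n ω j + u j + if j = i then m else 0)}
        (fun _ => (1 : ℝ)) | F n]
      =ᵐ[μ] fun ω => (Nat.multinomial Finset.univ u : ℝ) *
        (∏ j, ((X n ω j : ℝ) / ((∑ i', X0 i' : ℕ) + 2 * m * n : ℝ)) ^ u j) * p u i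

namespace NPAProcess

variable {Ω : Type} [MeasurableSpace Ω] (P : NPAProcess Ω)

/-- Total degree `S_n = S_0 + 2mn`. -/
def S (n : ℕ) : ℕ := ∑ i, P.X0 i + 2 * P.m * n

/-- Normalized degree vector `x_n = X_n / S_n`. -/
def x (n : ℕ) (ω : Ω) : Fin P.N → ℝ := fun i => (P.X n ω i : ℝ) / (P.S n : ℝ)

/-- Normalized type-count vector `a_n = A_n / (∑ i, A_0^i + n)`. -/
def a (n : ℕ) (ω : Ω) : Fin P.N → ℝ :=
  fun i => (P.A n ω i : ℝ) / ((∑ i', P.A0 i' : ℕ) + n : ℝ)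

/-- The vector field `P` of the process. -/
def vec : (Fin P.N → ℝ) → Fin P.N → ℝ := vecFieldP P.N P.m P.p

/-- The zero set `Z_P` of the process. -/
def Zp : Set (Fin P.N → ℝ) := zeroSetVecP P.N P.m P.p

end NPAProcess

namespace NPAProcess

theorem sum_T (N m : ℕ) (y : Fin N → ℝ) (i : Fin N) (hy : ∑ j, y j = 1) :
    ∑ u ∈ Finset.Nat.antidiagonalTuple N m,
      Polynomial.C ((Nat.multinomial Finset.univ u : ℝ) * (∏ j, y j ^ u j)) * Polynomial.X ^ (u i)
    = (Polynomial.C (1 - y i) + Polynomial.C (y i) * Polynomial.X) ^ m := by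
  have h1 := Finset.sum_pow_eq_sum_piAntidiag (Finset.univ : Finset (Fin N))
    (fun j => Polynomial.C (y j) * (if j = i then Polynomial.X else 1 : Polynomial ℝ)) m
  have h2 : ∑ j, Polynomial.C (y j) * (if j = i then Polynomial.X else 1 : Polynomial ℝ)
      = Polynomial.C (1 - y i) + Polynomial.C (y i) * Polynomial.X := by
    have : ∀ j, Polynomial.C (y j) * (if j = i then Polynomial.X else 1 : Polynomial ℝ)
      = Polynomial.C (y j) + (if j = i then Polynomial.C (y j) * (Polynomial.X - 1) else 0) := by
      intro j; split_ifs <;> ring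
    rw [Finset.sum_congr rfl (fun j _ => this j), Finset.sum_add_distrib, ← map_sum, hy]
    simp; ring
  rw [← h2, h1]
  have h3 : Finset.Nat.antidiagonalTuple N m = Finset.piAntidiag Finset.univ m := by
    ext u; simp [Finset.Nat.mem_antidiagonalTuple, Finset.mem_piAntidiag]
  rw [h3]
  refine Finset.sum_congr rfl fun u _ => ?_
  simp only [mul_pow, Finset.prod_mul_distrib, ite_pow, one_pow, Finset.prod_ite_eq',
    Finset.mem_univ, if_true]
  simp [mul_assoc]

theorem mom0 (N m : ℕ) (y : Fin N → ℝ) (i : Fin N) (hy : ∑ j, y j = 1) :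
    ∑ u ∈ Finset.Nat.antidiagonalTuple N m,
      (Nat.multinomial Finset.univ u : ℝ) * (∏ j, y j ^ u j) = 1 := by
  have := congrArg (Polynomial.eval 1) (sum_T N m y i hy)
  simpa [Polynomial.eval_finsetSum, Polynomial.eval_prod] using this

theorem mom1 (N m : ℕ) (y : Fin N → ℝ) (i : Fin N) (hy : ∑ j, y j = 1) :
    ∑ u ∈ Finset.Nat.antidiagonalTuple N m,
      (Nat.multinomial Finset.univ u : ℝ) * (∏ j, y j ^ u j) * (u i : ℝ) = m * y i := by
  have := congrArg (fun p => Polynomial.eval 1 (Polynomial.derivative p)) (sum_T N m y i hy)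
  simp only [Polynomial.derivative_sum, Polynomial.derivative_C_mul,
    Polynomial.eval_finsetSum, Polynomial.derivative_pow] at this
  simpa [Polynomial.eval_prod] using this

theorem mom2 (N m : ℕ) (y : Fin N → ℝ) (i : Fin N) (hy : ∑ j, y j = 1) :
    ∑ u ∈ Finset.Nat.antidiagonalTuple N m,
      (Nat.multinomial Finset.univ u : ℝ) * (∏ j, y j ^ u j) * (u i : ℝ) ^ 2
        = m * y i + m * (m - 1) * y i ^ 2 := by
  have h0 := sum_T N m y i hy
  generalize Finset.Nat.antidiagonalTuple N m = s at *
  have key : ∀ c : (Fin N → ℕ) → ℝ, (∑ u ∈ s,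
      Polynomial.C (c u) * Polynomial.X ^ (u i)
    = (Polynomial.C (1 - y i) + Polynomial.C (y i) * Polynomial.X) ^ m) →
    ∑ u ∈ s, c u * (u i : ℝ) ^ 2 = m * y i + m * (m - 1) * y i ^ 2 := by
    intro c h0
    have h := congrArg (fun p => Polynomial.eval 1 (Polynomial.X * Polynomial.derivative (Polynomial.X * Polynomial.derivative p))) h0
    have e : ∀ u : Fin N → ℕ, Polynomial.eval 1 (Polynomial.X * Polynomial.derivative (Polynomial.X * Polynomial.derivative
        (Polynomial.C (c u) * Polynomial.X ^ (u i)))) = c u * (u i : ℝ) ^ 2 := by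
      intro u
      rcases u i with _ | k
      · simp
      · simp [Polynomial.derivative_X_pow]
        ring
    simp only [map_sum, Finset.mul_sum, Polynomial.eval_finsetSum, e] at h
    rw [h]
    rcases m with _ | m
    · simp
    · simp [Polynomial.derivative_pow]
      ring
  exact key _ h0

variable {Ω : Type} [MeasurableSpace Ω] (P : NPAProcess Ω)

/-- transition index set -/
def T : Finset ((Fin P.N → ℕ) × Fin P.N) :=
  (Finset.Nat.antidiagonalTuple P.N P.m) ×ˢ Finset.univ

/-- transition events -/
def E (n : ℕ) (t : (Fin P.N → ℕ) × Fin P.N) : Set Ω :=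
  {ω | (∀ j, P.A (n + 1) ω j = P.A n ω j + if j = t.2 then 1 else 0) ∧
             (∀ j, P.X (n + 1) ω j = P.X n ω j + t.1 j + if j = t.2 then P.m else 0)}

/-- transition probabilities -/
def q (y : Fin P.N → ℝ) (t : (Fin P.N → ℕ) × Fin P.N) : ℝ :=
  (Nat.multinomial Finset.univ t.1 : ℝ) * (∏ j, y j ^ t.1 j) * P.p t.1 t.2

theorem measA (n : ℕ) : Measurable (P.A n) := (P.adaptedA n).mono (P.F.le n) le_rfl
theorem measX (n : ℕ) : Measurable (P.X n) := (P.adaptedX n).mono (P.F.le n) le_rfl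

theorem measE (n : ℕ) (t) : MeasurableSet (P.E n t) := by
  have hA := fun n => P.measA n
  have hX := fun n => P.measX n
  have hA' : ∀ n j, Measurable (fun ω => P.A n ω j) := fun n j => (measurable_pi_apply j).comp (hA n)
  have hX' : ∀ n j, Measurable (fun ω => P.X n ω j) := fun n j => (measurable_pi_apply j).comp (hX n)
  unfold E
  simp only [Set.ofPred_and, Set.ofPred_forall]
  refine (MeasurableSet.iInter fun j => ?_).inter (MeasurableSet.iInter fun j => ?_)
  · exact measurableSet_eq_fun (hA' _ _) ((hA' _ _).add_const _)
  · exact measurableSet_eq_fun (hX' _ _) (((hX' _ _).add_const _).add_const _)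

theorem S_pos (hX0 : ∀ i, 0 < P.X0 i) (n : ℕ) : 0 < P.S n := by
  unfold S
  have h2 := P.hN
  have : P.X0 ⟨0, by omega⟩ ≤ ∑ i, P.X0 i := Finset.single_le_sum (f := P.X0) (fun _ _ => Nat.zero_le _) (Finset.mem_univ _)
  have := hX0 ⟨0, by omega⟩
  omega

theorem S_succ (n : ℕ) : (P.S (n + 1) : ℝ) = P.S n + 2 * P.m := by
  unfold S; push_cast; ring

theorem x_sum (hX0 : ∀ i, 0 < P.X0 i) (n : ℕ) (ω : Ω) : ∑ i, P.x n ω i = 1 := by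
  unfold x
  rw [← Finset.sum_div, ← Nat.cast_sum, P.hXsum n ω]
  have := P.S_pos hX0 n
  exact div_self (by exact_mod_cast this.ne')

theorem x_nonneg (n : ℕ) (ω : Ω) (i) : 0 ≤ P.x n ω i := by unfold x; positivity

theorem x_le_one (hX0 : ∀ i, 0 < P.X0 i) (n : ℕ) (ω : Ω) (i) : P.x n ω i ≤ 1 := by
  rw [← P.x_sum hX0 n ω]
  exact Finset.single_le_sum (f := P.x n ω) (fun _ _ => P.x_nonneg n ω _) (Finset.mem_univ _)

theorem x_mul (hX0 : ∀ i, 0 < P.X0 i) (n : ℕ) (ω : Ω) (i) : P.x n ω i * P.S n = P.X n ω i := by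
  have := P.S_pos hX0 n
  unfold x; field_simp

theorem step' (n : ℕ) (t) (ht : t ∈ P.T) :
    P.μ[(P.E n t).indicator (fun _ => (1 : ℝ)) | P.F n] =ᵐ[P.μ] fun ω => P.q (P.x n ω) t := by
  have := P.step n t.1 (Finset.mem_product.1 ht).1 t.2
  refine this.trans (Eventually.of_forall fun ω => ?_)
  simp [q, x, S]

theorem E_unique (n : ℕ) (ω : Ω) (t t' : (Fin P.N → ℕ) × Fin P.N) (h : ω ∈ P.E n t) (h' : ω ∈ P.E n t') : t = t' := by
  obtain ⟨hA, hX⟩ := h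
  obtain ⟨hA', hX'⟩ := h'
  have h2 : t.2 = t'.2 := by
    have a1 := hA t.2
    have a2 := hA' t.2
    by_contra hne
    simp [hne] at a1 a2
    omega
  have h1 : t.1 = t'.1 := by
    funext j
    have a1 := hX j
    have a2 := hX' j
    rw [h2] at a1
    omega
  exact Prod.ext h1 h2

theorem E_sum (n : ℕ) (ω : Ω) (t) (ht : t ∈ P.T) (h : ω ∈ P.E n t) (f : (Fin P.N → ℕ) × Fin P.N → ℝ) :
    ∑ s ∈ P.T, f s * (P.E n s).indicator (fun _ => (1 : ℝ)) ω = f t := by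
  rw [Finset.sum_eq_single t]
  · simp [h]
  · intro b _ hb
    rw [Set.indicator_of_notMem (fun hh => hb (P.E_unique n ω _ _ hh h)), mul_zero]
  · exact fun h => absurd ht h

theorem int_ind (n : ℕ) (t) : Integrable ((P.E n t).indicator (fun _ => (1 : ℝ))) P.μ := by
  have := P.isProb
  exact (integrable_const 1).indicator (P.measE n t)

theorem x_meas (n : ℕ) (i) : Measurable[P.F n] (fun ω => P.x n ω i) := by
  unfold x
  have := P.adaptedX n
  exact ((measurable_from_top (f := fun k : ℕ => (k:ℝ))).comp ((measurable_pi_apply i).comp this)).div_const _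

theorem integral_weight (n : ℕ) (f : (Fin P.N → ℕ) × Fin P.N → ℝ) (w : Ω → ℝ)
    (hw : StronglyMeasurable[P.F n] w) (hwi : Integrable w P.μ) :
    ∫ ω, w ω * ∑ t ∈ P.T, f t * (P.E n t).indicator (fun _ => (1 : ℝ)) ω ∂P.μ
      = ∫ ω, w ω * ∑ t ∈ P.T, f t * P.q (P.x n ω) t ∂P.μ := by
  have := P.isProb
  have hI : ∀ t, Integrable (fun ω => w ω * (P.E n t).indicator (fun _ => (1 : ℝ)) ω) P.μ := by
    intro t
    have : (fun ω => w ω * (P.E n t).indicator (fun _ => (1 : ℝ)) ω) = (P.E n t).indicator w := by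
      ext ω; by_cases h : ω ∈ P.E n t <;> simp [h]
    rw [this]; exact hwi.indicator (P.measE n t)
  have hc : ∀ t ∈ P.T, P.μ[(fun ω => w ω * (P.E n t).indicator (fun _ => (1 : ℝ)) ω) | P.F n]
      =ᵐ[P.μ] fun ω => w ω * P.q (P.x n ω) t := by
    intro t ht
    refine (condExp_mul_of_stronglyMeasurable_left hw (hI t) (P.int_ind n t)).trans ?_
    filter_upwards [P.step' n t ht] with ω h
    simp [h]
  have hI2 : ∀ t ∈ P.T, Integrable (fun ω => w ω * P.q (P.x n ω) t) P.μ := fun t ht =>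
    integrable_condExp.congr (hc t ht)
  have e1 : ∀ ω, w ω * ∑ t ∈ P.T, f t * (P.E n t).indicator (fun _ => (1 : ℝ)) ω
      = ∑ t ∈ P.T, f t * (w ω * (P.E n t).indicator (fun _ => (1 : ℝ)) ω) := fun ω => by
    rw [Finset.mul_sum]; exact Finset.sum_congr rfl fun _ _ => by ring
  have e2 : ∀ ω, w ω * ∑ t ∈ P.T, f t * P.q (P.x n ω) t
      = ∑ t ∈ P.T, f t * (w ω * P.q (P.x n ω) t) := fun ω => by
    rw [Finset.mul_sum]; exact Finset.sum_congr rfl fun _ _ => by ring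
  simp_rw [e1, e2]
  rw [integral_finsetSum _ (fun t ht => (hI t).const_mul _),
    integral_finsetSum _ (fun t ht => (hI2 t ht).const_mul _)]
  refine Finset.sum_congr rfl fun t ht => ?_
  rw [integral_const_mul, integral_const_mul, ← integral_congr_ae (hc t ht), integral_condExp (P.F.le n)]

theorem q_sum (hlin : ∀ u ∈ Finset.Nat.antidiagonalTuple P.N P.m, ∀ i, P.p u i = (u i : ℝ) / P.m)
    (y : Fin P.N → ℝ) (f : (Fin P.N → ℕ) × Fin P.N → ℝ) :
    ∑ t ∈ P.T, f t * P.q y t = ∑ u ∈ Finset.Nat.antidiagonalTuple P.N P.m,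
      (Nat.multinomial Finset.univ u : ℝ) * (∏ j, y j ^ u j) * ∑ k, (u k : ℝ) / P.m * f (u, k) := by
  unfold T
  rw [Finset.sum_product]
  refine Finset.sum_congr rfl fun u hu => ?_
  rw [Finset.mul_sum]
  refine Finset.sum_congr rfl fun k _ => ?_
  simp only [q, hlin u hu]
  ring

theorem u_sum {u} (hu : u ∈ Finset.Nat.antidiagonalTuple P.N P.m) : ∑ k, (u k : ℝ) / P.m = 1 := by
  rw [← Finset.sum_div, ← Nat.cast_sum, Finset.Nat.mem_antidiagonalTuple.1 hu]
  have := P.hm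
  exact div_self (by positivity)

theorem ae_step (hlin : ∀ u ∈ Finset.Nat.antidiagonalTuple P.N P.m, ∀ i, P.p u i = (u i : ℝ) / P.m)
    (hX0 : ∀ i, 0 < P.X0 i) (n : ℕ) : ∀ᵐ ω ∂P.μ, ∃ t ∈ P.T, ω ∈ P.E n t := by
  have := P.isProb
  have h := P.integral_weight n (fun _ => 1) (fun _ => 1) stronglyMeasurable_const (integrable_const _)
  have h2 := P.hN
  have e : ∀ ω, ∑ t ∈ P.T, P.q (P.x n ω) t = 1 := by
    intro ω
    have := P.q_sum hlin (P.x n ω) (fun _ => 1)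
    rw [Finset.sum_congr rfl (fun t _ => (one_mul (P.q (P.x n ω) t)).symm), this]
    refine Eq.trans ?_ (mom0 P.N P.m (P.x n ω) ⟨0, by omega⟩ (P.x_sum hX0 n ω))
    refine Finset.sum_congr rfl fun u hu => ?_
    simp [P.u_sum hu]
  simp only [one_mul, mul_one, e] at h
  simp only [integral_const, smul_eq_mul, mul_one, probReal_univ] at h
  set g : Ω → ℝ := fun ω => ∑ t ∈ P.T, (P.E n t).indicator (fun _ => (1 : ℝ)) ω with hg
  have gi : Integrable g P.μ := integrable_finsetSum _ fun t _ => P.int_ind n t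
  have hle : ∀ ω, 0 ≤ 1 - g ω := by
    intro ω
    by_cases hh : ∃ t ∈ P.T, ω ∈ P.E n t
    · obtain ⟨t, ht, hh⟩ := hh
      have := P.E_sum n ω t ht hh (fun _ => 1)
      simp only [one_mul] at this
      simp [hg, this]
    · push Not at hh
      simp only [hg]
      rw [Finset.sum_eq_zero fun t ht => Set.indicator_of_notMem (hh t ht) _]; norm_num
  have h0 : ∫ ω, (1 - g ω) ∂P.μ = 0 := by
    rw [integral_sub (integrable_const _) gi, h]; simp
  have := (integral_eq_zero_iff_of_nonneg hle ((integrable_const _).sub gi)).1 h0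
  filter_upwards [this] with ω hω
  by_contra hh
  push Not at hh
  simp only [hg, Pi.zero_apply] at hω
  rw [Finset.sum_eq_zero fun t ht => Set.indicator_of_notMem (hh t ht) _] at hω
  norm_num at hω

theorem weight_gen (hlin : ∀ u ∈ Finset.Nat.antidiagonalTuple P.N P.m, ∀ i, P.p u i = (u i : ℝ) / P.m)
    (hX0 : ∀ i, 0 < P.X0 i) (n : ℕ) (w : Ω → ℝ)
    (hw : StronglyMeasurable[P.F n] w) (hwi : Integrable w P.μ) (Y : Ω → ℝ)
    (f : (Fin P.N → ℕ) × Fin P.N → ℝ) (hY : ∀ t ∈ P.T, ∀ ω ∈ P.E n t, Y ω = f t)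
    (g : (Fin P.N → ℝ) → ℝ)
    (hg : ∀ y : Fin P.N → ℝ, ∑ j, y j = 1 → ∑ u ∈ Finset.Nat.antidiagonalTuple P.N P.m,
      (Nat.multinomial Finset.univ u : ℝ) * (∏ j, y j ^ u j) * ∑ k, (u k : ℝ) / P.m * f (u, k) = g y) :
    ∫ ω, w ω * Y ω ∂P.μ = ∫ ω, w ω * g (P.x n ω) ∂P.μ := by
  have h := P.integral_weight n f w hw hwi
  have e : ∀ ω, ∑ t ∈ P.T, f t * P.q (P.x n ω) t = g (P.x n ω) := fun ω => by
    rw [P.q_sum hlin, hg _ (P.x_sum hX0 n ω)]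
  simp_rw [e] at h
  rw [← h]
  refine integral_congr_ae ?_
  filter_upwards [P.ae_step hlin hX0 n] with ω ⟨t, ht, hω⟩
  rw [P.E_sum n ω t ht hω, hY t ht ω hω]

theorem weight_A (hlin : ∀ u ∈ Finset.Nat.antidiagonalTuple P.N P.m, ∀ i, P.p u i = (u i : ℝ) / P.m)
    (hX0 : ∀ i, 0 < P.X0 i) (n : ℕ) (i : Fin P.N) (w : Ω → ℝ)
    (hw : StronglyMeasurable[P.F n] w) (hwi : Integrable w P.μ) :
    ∫ ω, w ω * ((P.A (n + 1) ω i : ℝ) - P.A n ω i) ∂P.μ = ∫ ω, w ω * P.x n ω i ∂P.μ := by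
  refine P.weight_gen hlin hX0 n w hw hwi _ (fun t => if i = t.2 then 1 else 0) ?_ (fun y => y i) ?_
  · intro t ht ω hω
    rw [hω.1 i]; push_cast; ring
  · intro y hy
    have hm : (P.m : ℝ) ≠ 0 := by have := P.hm; positivity
    simp only [mul_ite, mul_one, mul_zero, Finset.sum_ite_eq, Finset.mem_univ, if_true]
    have := mom1 P.N P.m y i hy
    simp_rw [mul_div_assoc']
    rw [← Finset.sum_div, this]; field_simp

theorem weight_X (hlin : ∀ u ∈ Finset.Nat.antidiagonalTuple P.N P.m, ∀ i, P.p u i = (u i : ℝ) / P.m)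
    (hX0 : ∀ i, 0 < P.X0 i) (n : ℕ) (i : Fin P.N) (w : Ω → ℝ)
    (hw : StronglyMeasurable[P.F n] w) (hwi : Integrable w P.μ) :
    ∫ ω, w ω * ((P.X (n + 1) ω i : ℝ) - P.X n ω i) ∂P.μ = ∫ ω, w ω * (2 * P.m * P.x n ω i) ∂P.μ := by
  refine P.weight_gen hlin hX0 n w hw hwi _ (fun t => (t.1 i : ℝ) + if i = t.2 then (P.m : ℝ) else 0) ?_
    (fun y => 2 * P.m * y i) ?_
  · intro t ht ω hω
    rw [hω.2 i]; push_cast; ring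
  · intro y hy
    have hm : (P.m : ℝ) ≠ 0 := by have := P.hm; positivity
    have := mom1 P.N P.m y i hy
    rw [mul_assoc, ← this, Finset.mul_sum]
    refine Finset.sum_congr rfl fun u hu => ?_
    have e : ∀ k, (u k : ℝ) / P.m * (u i + if i = k then (P.m : ℝ) else 0)
      = (u k : ℝ) / P.m * u i + if i = k then (u k : ℝ) / P.m * P.m else 0 := by
      intro k; split_ifs <;> ring
    simp only [e, Finset.sum_add_distrib, ← Finset.sum_mul, P.u_sum hu]
    simp only [Finset.sum_ite_eq, Finset.mem_univ, if_true]
    field_simp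
    ring

theorem weight_X2 (hlin : ∀ u ∈ Finset.Nat.antidiagonalTuple P.N P.m, ∀ i, P.p u i = (u i : ℝ) / P.m)
    (hX0 : ∀ i, 0 < P.X0 i) (n : ℕ) (i : Fin P.N) (w : Ω → ℝ)
    (hw : StronglyMeasurable[P.F n] w) (hwi : Integrable w P.μ) :
    ∫ ω, w ω * ((P.X (n + 1) ω i : ℝ) - P.X n ω i) ^ 2 ∂P.μ =
      ∫ ω, w ω * ((P.m ^ 2 + 3 * P.m) * (P.x n ω i * (1 - P.x n ω i)) + (2 * P.m * P.x n ω i) ^ 2) ∂P.μ := by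
  refine P.weight_gen hlin hX0 n w hw hwi _ (fun t => (t.1 i + if i = t.2 then (P.m : ℝ) else 0) ^ 2) ?_
    (fun y => (P.m ^ 2 + 3 * P.m) * (y i * (1 - y i)) + (2 * P.m * y i) ^ 2) ?_
  · intro t ht ω hω
    rw [hω.2 i]; push_cast; ring
  · intro y hy
    have hm : (P.m : ℝ) ≠ 0 := by have := P.hm; positivity
    have h1 := mom1 P.N P.m y i hy
    have h2 := mom2 P.N P.m y i hy
    have : (P.m ^ 2 + 3 * P.m) * (y i * (1 - y i)) + (2 * P.m * y i) ^ 2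
      = 3 * (P.m * y i + P.m * (P.m - 1) * y i ^ 2) + P.m * (P.m * y i) := by ring
    rw [this, ← h2, ← h1, Finset.mul_sum, Finset.mul_sum, ← Finset.sum_add_distrib]
    refine Finset.sum_congr rfl fun u hu => ?_
    have e : ∀ k, (u k : ℝ) / P.m * (u i + if i = k then (P.m : ℝ) else 0) ^ 2
      = (u k : ℝ) / P.m * u i ^ 2 + if i = k then (u k : ℝ) / P.m * (2 * u i * P.m + P.m ^ 2) else 0 := by
      intro k; split_ifs <;> ring
    simp only [e, Finset.sum_add_distrib, ← Finset.sum_mul, P.u_sum hu]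
    simp only [Finset.sum_ite_eq, Finset.mem_univ, if_true]
    field_simp
    ring

theorem ae_bounds (hlin : ∀ u ∈ Finset.Nat.antidiagonalTuple P.N P.m, ∀ i, P.p u i = (u i : ℝ) / P.m)
    (hX0 : ∀ i, 0 < P.X0 i) : ∀ᵐ ω ∂P.μ, ∀ n i, P.X n ω i ≤ P.X (n + 1) ω i ∧
      P.X (n + 1) ω i ≤ P.X n ω i + 2 * P.m ∧ P.A n ω i ≤ P.A (n + 1) ω i ∧ P.A (n + 1) ω i ≤ P.A n ω i + 1 := by
  rw [ae_all_iff]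
  intro n
  filter_upwards [P.ae_step hlin hX0 n] with ω ⟨t, ht, hω⟩ i
  have hA := hω.1 i
  have hX := hω.2 i
  have hu := Finset.Nat.mem_antidiagonalTuple.1 (Finset.mem_product.1 ht).1
  have : t.1 i ≤ ∑ i, t.1 i := Finset.single_le_sum (f := t.1) (fun _ _ => Nat.zero_le _) (Finset.mem_univ _)
  refine ⟨?_, ?_, ?_, ?_⟩ <;> split_ifs at hA hX <;> omega


/-- linear model with positive initial degrees -/
def Lin : Prop := (∀ u ∈ Finset.Nat.antidiagonalTuple P.N P.m, ∀ i, P.p u i = (u i : ℝ) / P.m) ∧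
    (∀ i, 0 < P.X0 i)

variable {P}

theorem int3 {μ : Measure Ω} {f g k : Ω → ℝ} (hf : Integrable f μ) (hg : Integrable g μ) (hk : Integrable k μ) :
    ∫ ω, (f ω + g ω + k ω) ∂μ = ∫ ω, f ω ∂μ + ∫ ω, g ω ∂μ + ∫ ω, k ω ∂μ := by
  rw [← integral_add hf hg]
  exact integral_add (hf.add hg) hk

theorem x_sm (n : ℕ) (i) : StronglyMeasurable[P.F n] (fun ω => P.x n ω i) :=
  (P.x_meas n i).stronglyMeasurable

theorem x_aesm (n : ℕ) (i) : AEStronglyMeasurable (fun ω => P.x n ω i) P.μ :=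
  ((P.x_sm n i).mono (P.F.le n)).aestronglyMeasurable

theorem Lin.x_abs (h : P.Lin) (n ω i) : |P.x n ω i| ≤ 1 := by
  rw [abs_of_nonneg (P.x_nonneg n ω i)]; exact P.x_le_one h.2 n ω i

theorem Lin.Spos (h : P.Lin) (n) : (0 : ℝ) < P.S n := by exact_mod_cast P.S_pos h.2 n

theorem mpos (P : NPAProcess Ω) : (1 : ℝ) ≤ P.m := by exact_mod_cast P.hm

theorem Lin.wx (h : P.Lin) {w : Ω → ℝ} (hwi : Integrable w P.μ) (n i) :
    Integrable (fun ω => w ω * P.x n ω i) P.μ :=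
  hwi.mul_bdd (c := 1) (x_aesm n i) (Eventually.of_forall fun ω => by simpa using h.x_abs n ω i)

theorem Lin.x_int (h : P.Lin) (n i) : Integrable (fun ω => P.x n ω i) P.μ := by
  have := P.isProb
  simpa using h.wx (w := fun _ => 1) (integrable_const _) n i

theorem Lin.wDg (h : P.Lin) {w : Ω → ℝ} (hwi : Integrable w P.μ) (n k i) :
    Integrable (fun ω => w ω * (P.x k ω i - P.x n ω i)) P.μ := by
  simp only [mul_sub]
  exact (h.wx hwi k i).sub (h.wx hwi n i)

theorem Lin.wD2g (h : P.Lin) {w : Ω → ℝ} (hwi : Integrable w P.μ) (n k i) :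
    Integrable (fun ω => w ω * (P.x k ω i - P.x n ω i) ^ 2) P.μ := by
  have := h.wDg (h.wDg hwi n k i) n k i
  refine this.congr (Eventually.of_forall fun ω => ?_)
  simp only; ring

theorem Lin.d_eq (h : P.Lin) (n ω i) : (P.X (n + 1) ω i : ℝ) - P.X n ω i =
    P.S (n + 1) * (P.x (n + 1) ω i - P.x n ω i) + 2 * P.m * P.x n ω i := by
  rw [← P.x_mul h.2 (n + 1), ← P.x_mul h.2 n, P.S_succ]; ring

theorem Lin.weight_D (h : P.Lin) (n i) {w : Ω → ℝ}
    (hw : StronglyMeasurable[P.F n] w) (hwi : Integrable w P.μ) :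
    ∫ ω, w ω * (P.x (n + 1) ω i - P.x n ω i) ∂P.μ = 0 := by
  have h1 := P.weight_X h.1 h.2 n i w hw hwi
  have hS := h.Spos (n + 1)
  have e : ∀ ω, w ω * ((P.X (n + 1) ω i : ℝ) - P.X n ω i) =
      P.S (n + 1) * (w ω * (P.x (n + 1) ω i - P.x n ω i)) + w ω * (2 * P.m * P.x n ω i) := by
    intro ω; rw [h.d_eq]; ring
  have i2 : Integrable (fun ω => w ω * (2 * P.m * P.x n ω i)) P.μ :=
    ((h.wx hwi n i).const_mul (2 * P.m)).congr (Eventually.of_forall fun ω => by simp only; ring)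
  simp_rw [e] at h1
  rw [integral_add ((h.wDg hwi n (n+1) i).const_mul _) i2, integral_const_mul] at h1
  have : (P.S (n + 1) : ℝ) * ∫ ω, w ω * (P.x (n + 1) ω i - P.x n ω i) ∂P.μ = 0 := by linarith
  exact (mul_eq_zero.1 this).resolve_left hS.ne'

theorem Lin.weight_D2 (h : P.Lin) (n i) {w : Ω → ℝ}
    (hw : StronglyMeasurable[P.F n] w) (hwi : Integrable w P.μ) :
    ∫ ω, w ω * (P.x (n + 1) ω i - P.x n ω i) ^ 2 ∂P.μ =
      (P.m ^ 2 + 3 * P.m) / (P.S (n + 1) : ℝ) ^ 2 * ∫ ω, w ω * (P.x n ω i * (1 - P.x n ω i)) ∂P.μ := by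
  have h1 := P.weight_X2 h.1 h.2 n i w hw hwi
  have hS := h.Spos (n + 1)
  have e : ∀ ω, w ω * ((P.X (n + 1) ω i : ℝ) - P.X n ω i) ^ 2 =
      (P.S (n + 1) ^ 2 * (w ω * (P.x (n + 1) ω i - P.x n ω i) ^ 2)
       + (4 * P.S (n + 1) * P.m) * ((w ω * P.x n ω i) * (P.x (n + 1) ω i - P.x n ω i)))
       + (4 * P.m ^ 2) * (w ω * P.x n ω i * P.x n ω i) := by
    intro ω; rw [h.d_eq]; ring
  have e2 : ∀ ω, w ω * ((P.m ^ 2 + 3 * P.m) * (P.x n ω i * (1 - P.x n ω i)) + (2 * P.m * P.x n ω i) ^ 2)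
      = (P.m ^ 2 + 3 * P.m) * (w ω * (P.x n ω i * (1 - P.x n ω i)))
       + (4 * P.m ^ 2) * (w ω * P.x n ω i * P.x n ω i) := by
    intro ω; ring
  have i1 : Integrable (fun ω => w ω * (P.x n ω i * (1 - P.x n ω i))) P.μ :=
    ((h.wx hwi n i).sub (h.wx (h.wx hwi n i) n i)).congr
      (Eventually.of_forall fun ω => by simp only [Pi.sub_apply]; ring)
  have i3 := (h.wx (h.wx hwi n i) n i).const_mul (4 * (P.m : ℝ) ^ 2)
  have i4 := (h.wDg (h.wx hwi n i) n (n+1) i).const_mul (4 * (P.S (n + 1) : ℝ) * P.m)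
  have i5 := (h.wD2g hwi n (n+1) i).const_mul ((P.S (n + 1) : ℝ) ^ 2)
  simp_rw [e, e2] at h1
  rw [int3 i5 i4 i3, integral_add (i1.const_mul _) i3,
    integral_const_mul, integral_const_mul, h.weight_D n i (w := fun ω => w ω * P.x n ω i) (hw.mul (P.x_sm n i)) (h.wx hwi n i),
    integral_const_mul (((P.m : ℝ) ^ 2 + 3 * P.m))] at h1
  rw [div_mul_eq_mul_div, eq_div_iff (by positivity)]
  linarith

theorem Lin.martingale (h : P.Lin) (i) : Martingale (fun n ω => P.x n ω i) P.F P.μ := by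
  have := P.isProb
  refine martingale_of_setIntegral_eq_succ (fun n => P.x_sm n i) (fun n => h.x_int n i) ?_
  intro n s hs
  have hs' := P.F.le n s hs
  have h1 := h.weight_D n i (w := s.indicator (fun _ => 1))
    (stronglyMeasurable_const.indicator hs) ((integrable_const _).indicator hs')
  have e : ∀ ω, s.indicator (fun _ => (1 : ℝ)) ω * (P.x (n + 1) ω i - P.x n ω i)
    = s.indicator (fun ω => P.x (n + 1) ω i - P.x n ω i) ω := by
    intro ω; by_cases hh : ω ∈ s <;> simp [hh]
  simp_rw [e] at h1
  rw [integral_indicator hs', integral_sub (h.x_int _ _).integrableOn (h.x_int _ _).integrableOn] at h1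
  linarith

/-- the limit -/
def lim (P : NPAProcess Ω) (ω : Ω) : Fin P.N → ℝ := fun i => limsup (fun n => P.x n ω i) atTop

theorem lim_sm (P : NPAProcess Ω) (i) : StronglyMeasurable (fun ω => P.lim ω i) :=
  (Measurable.limsup fun n => (P.x_meas n i).mono (P.F.le n) le_rfl).stronglyMeasurable

theorem Lin.tendsto (h : P.Lin) : ∀ᵐ ω ∂P.μ, ∀ i, Tendsto (fun n => P.x n ω i) atTop (nhds (P.lim ω i)) := by
  have := P.isProb
  rw [ae_all_iff]
  intro i
  suffices hb : ∀ n, eLpNorm (fun ω => P.x n ω i) 1 P.μ ≤ (1 : NNReal) by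
    filter_upwards [(h.martingale i).submartingale.exists_ae_tendsto_of_bdd hb] with ω ⟨c, hc⟩
    rw [show P.lim ω i = c from hc.limsup_eq]
    exact hc
  intro n
  refine (eLpNorm_le_of_ae_bound (C := 1) (Eventually.of_forall fun ω => by simpa using h.x_abs n ω i)).trans ?_
  simp

theorem Lin.lim_mem (h : P.Lin) : ∀ᵐ ω ∂P.μ, P.lim ω ∈ stdSimplex ℝ (Fin P.N) := by
  filter_upwards [h.tendsto] with ω hω
  refine ⟨fun i => ge_of_tendsto' (hω i) fun n => P.x_nonneg n ω i, ?_⟩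
  refine tendsto_nhds_unique (tendsto_finsetSum _ fun i _ => hω i) ?_
  simp only [P.x_sum h.2]
  exact tendsto_const_nhds

theorem Lin.weight_x (h : P.Lin) (n i) {w : Ω → ℝ}
    (hw : StronglyMeasurable[P.F n] w) (hwi : Integrable w P.μ) (k : ℕ) :
    ∫ ω, w ω * P.x (n + k) ω i ∂P.μ = ∫ ω, w ω * P.x n ω i ∂P.μ := by
  induction k with
  | zero => rfl
  | succ k ih =>
    have h1 := h.weight_D (n + k) i (hw.mono (P.F.mono (by omega))) hwi
    simp only [mul_sub] at h1
    rw [integral_sub (h.wx hwi _ _) (h.wx hwi _ _)] at h1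
    rw [← ih, ← add_assoc]; linarith

theorem Lin.var (h : P.Lin) (n i) {w : Ω → ℝ}
    (hw : StronglyMeasurable[P.F n] w) (hwi : Integrable w P.μ) (hw0 : ∀ ω, 0 ≤ w ω) (k : ℕ) :
    ∫ ω, w ω * (P.x (n + k) ω i - P.x n ω i) ^ 2 ∂P.μ ≤
      ((P.m : ℝ) + 3) / 2 * (1 / P.S n - 1 / P.S (n + k)) * ∫ ω, w ω * P.x n ω i ∂P.μ := by
  induction k with
  | zero => simp
  | succ k ih =>
    have hw' := hw.mono (P.F.mono (show n ≤ n + k by omega))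
    have hx' : StronglyMeasurable[P.F (n + k)] (fun ω => P.x n ω i) :=
      (P.x_sm n i).mono (P.F.mono (by omega))
    have h1 := h.weight_D (n + k) i (w := fun ω => w ω * (P.x (n + k) ω i - P.x n ω i))
      (hw'.mul ((P.x_sm _ i).sub hx')) (h.wDg hwi _ _ i)
    have h2 := h.weight_D2 (n + k) i hw' hwi
    have e : ∀ ω, w ω * (P.x (n + (k + 1)) ω i - P.x n ω i) ^ 2 =
      (w ω * (P.x (n + k) ω i - P.x n ω i) ^ 2 + 2 * (w ω * (P.x (n + k) ω i - P.x n ω i) * (P.x (n + k + 1) ω i - P.x (n + k) ω i)))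
      + w ω * (P.x (n + k + 1) ω i - P.x (n + k) ω i) ^ 2 := by
      intro ω; rw [← add_assoc]; ring
    simp_rw [e]
    have i1 := h.wD2g hwi n (n + k) i
    have i2 := (h.wDg (h.wDg hwi n (n + k) i) (n + k) (n + k + 1) i).const_mul 2
    rw [int3 i1 i2 (h.wD2g hwi _ _ i), integral_const_mul, h1, h2]
    have h3 : ∫ ω, w ω * (P.x (n + k) ω i * (1 - P.x (n + k) ω i)) ∂P.μ ≤ ∫ ω, w ω * P.x n ω i ∂P.μ := by
      rw [← h.weight_x n i hw hwi k]
      refine integral_mono_of_nonneg (Eventually.of_forall fun ω => ?_) (h.wx hwi _ _) (Eventually.of_forall fun ω => ?_)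
      · have a := P.x_nonneg (n + k) ω i
        have b := P.x_le_one h.2 (n + k) ω i
        exact mul_nonneg (hw0 ω) (mul_nonneg a (by linarith))
      · have a := P.x_nonneg (n + k) ω i
        have b := P.x_le_one h.2 (n + k) ω i
        refine mul_le_mul_of_nonneg_left ?_ (hw0 ω)
        nlinarith
    have hI : 0 ≤ ∫ ω, w ω * P.x n ω i ∂P.μ := integral_nonneg fun ω => mul_nonneg (hw0 ω) (P.x_nonneg n ω i)
    set I := ∫ ω, w ω * P.x n ω i ∂P.μ
    have hS := h.Spos (n + k)
    have hS' := h.Spos (n + k + 1)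
    have hss := P.S_succ (n + k)
    have hm := P.mpos
    have h4 : (P.m ^ 2 + 3 * P.m) / (P.S (n + k + 1) : ℝ) ^ 2 ≤
        ((P.m : ℝ) + 3) / 2 * (1 / P.S (n + k) - 1 / P.S (n + k + 1)) := by
      have : ((P.m : ℝ) + 3) / 2 * (1 / P.S (n + k) - 1 / P.S (n + k + 1)) =
        (P.m ^ 2 + 3 * P.m) / (P.S (n + k) * P.S (n + k + 1)) := by
        have : (P.m : ℝ) = (P.S (n + k + 1) - P.S (n + k)) / 2 := by linarith
        rw [div_sub_div _ _ hS.ne' hS'.ne', div_mul_div_comm, div_eq_div_iff (by positivity) (by positivity), hss]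
        ring
      rw [this]
      apply div_le_div_of_nonneg_left (by positivity) (by positivity)
      rw [sq]
      apply mul_le_mul_of_nonneg_right _ hS'.le
      linarith
    have h5 : (P.m ^ 2 + 3 * P.m) / (P.S (n + k + 1) : ℝ) ^ 2 * ∫ ω, w ω * (P.x (n + k) ω i * (1 - P.x (n + k) ω i)) ∂P.μ
      ≤ ((P.m : ℝ) + 3) / 2 * (1 / P.S (n + k) - 1 / P.S (n + k + 1)) * I :=
      (mul_le_mul_of_nonneg_left h3 (by positivity)).trans (mul_le_mul_of_nonneg_right h4 hI)
    rw [← add_assoc]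
    calc _ ≤ _ := add_le_add (add_le_add ih le_rfl) h5
      _ = _ := by ring

theorem Lin.lim_sub (h : P.Lin) (n i) : ∀ᵐ ω ∂P.μ, |P.lim ω i - P.x n ω i| ≤ 1 := by
  filter_upwards [h.tendsto] with ω hω
  have a := P.x_nonneg n ω i
  have b := P.x_le_one h.2 n ω i
  have c := ge_of_tendsto' (hω i) fun n => P.x_nonneg n ω i
  have d := le_of_tendsto' (hω i) fun n => P.x_le_one h.2 n ω i
  rw [abs_le]; constructor <;> linarith

theorem Lin.wlim (h : P.Lin) (n i) {w : Ω → ℝ} (hwi : Integrable w P.μ) :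
    Integrable (fun ω => w ω * (P.lim ω i - P.x n ω i) ^ 2) P.μ := by
  refine hwi.mul_bdd (c := 1) (((P.lim_sm i).aestronglyMeasurable.sub (x_aesm n i)).pow 2) ?_
  filter_upwards [h.lim_sub n i] with ω hω
  rw [norm_pow, Real.norm_eq_abs]
  exact pow_le_one₀ (abs_nonneg _) hω

theorem Lin.var_lim (h : P.Lin) (n i) {w : Ω → ℝ}
    (hw : StronglyMeasurable[P.F n] w) (hwi : Integrable w P.μ) (hw0 : ∀ ω, 0 ≤ w ω) :
    ∫ ω, w ω * (P.lim ω i - P.x n ω i) ^ 2 ∂P.μ ≤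
      ((P.m : ℝ) + 3) / 2 * (1 / P.S n) * ∫ ω, w ω * P.x n ω i ∂P.μ := by
  have hI : 0 ≤ ∫ ω, w ω * P.x n ω i ∂P.μ := integral_nonneg fun ω => mul_nonneg (hw0 ω) (P.x_nonneg n ω i)
  have ht : Tendsto (fun k => ∫ ω, w ω * (P.x (n + k) ω i - P.x n ω i) ^ 2 ∂P.μ) atTop
      (nhds (∫ ω, w ω * (P.lim ω i - P.x n ω i) ^ 2 ∂P.μ)) := by
    refine tendsto_integral_of_dominated_convergence w (fun k => (h.wD2g hwi _ _ i).aestronglyMeasurable) hwi ?_ ?_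
    · intro k
      refine Eventually.of_forall fun ω => ?_
      have a := P.x_nonneg n ω i
      have b := P.x_le_one h.2 n ω i
      have c := P.x_nonneg (n + k) ω i
      have d := P.x_le_one h.2 (n + k) ω i
      rw [Real.norm_of_nonneg (mul_nonneg (hw0 ω) (sq_nonneg _))]
      refine mul_le_of_le_one_right (hw0 ω) ?_
      rw [sq_le_one_iff_abs_le_one, abs_le]
      constructor <;> linarith
    · filter_upwards [h.tendsto] with ω hω
      have := (hω i).comp (tendsto_add_atTop_nat n)
      refine (((this.congr fun k => ?_).sub_const (P.x n ω i)).pow 2).const_mul (w ω)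
      simp [add_comm]
  refine le_of_tendsto' ht fun k => (h.var n i hw hwi hw0 k).trans ?_
  refine mul_le_mul_of_nonneg_right (mul_le_mul_of_nonneg_left ?_ (by positivity)) hI
  have := h.Spos (n + k)
  have : 0 ≤ 1 / (P.S (n + k) : ℝ) := by positivity
  linarith


theorem ae_tendsto_zero {μ : Measure Ω} (f : ℕ → Ω → ℝ) (hf0 : ∀ n ω, 0 ≤ f n ω)
    (hfi : ∀ n, Integrable (f n) μ) (b : ℕ → ℝ) (hb : Summable b) (hle : ∀ n, ∫ ω, f n ω ∂μ ≤ b n) :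
    ∀ᵐ ω ∂μ, Tendsto (fun n => f n ω) atTop (nhds 0) := by
  have hb0 : ∀ n, 0 ≤ b n := fun n => (integral_nonneg (hf0 n)).trans (hle n)
  have h1 : ∫⁻ ω, ∑' n, ENNReal.ofReal (f n ω) ∂μ ≠ ⊤ := by
    rw [lintegral_tsum fun n => (hfi n).aemeasurable.ennreal_ofReal]
    refine ne_top_of_le_ne_top hb.tsum_ofReal_ne_top (ENNReal.tsum_le_tsum fun n => ?_)
    rw [← ofReal_integral_eq_lintegral_ofReal (hfi n) (Eventually.of_forall (hf0 n))]
    exact ENNReal.ofReal_le_ofReal (hle n)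
  have h2 := ae_lt_top' (AEMeasurable.tsum fun n => (hfi n).aemeasurable.ennreal_ofReal) h1
  filter_upwards [h2] with ω hω
  have h3 := ENNReal.tendsto_atTop_zero_of_tsum_ne_top hω.ne
  have h4 := (ENNReal.tendsto_toReal ENNReal.zero_ne_top).comp h3
  refine h4.congr fun n => ?_
  simp [ENNReal.toReal_ofReal (hf0 n ω)]

/-- auxiliary martingale -/
def M (P : NPAProcess Ω) (i : Fin P.N) (n : ℕ) (ω : Ω) : ℝ := P.A n ω i - P.X n ω i / (2 * P.m)

/-- its initial value -/
def c0 (P : NPAProcess Ω) (i : Fin P.N) : ℝ := |(P.A0 i : ℝ) - P.X0 i / (2 * P.m)|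

theorem M_sm (i n) : StronglyMeasurable[P.F n] (P.M i n) := by
  have h1 : Measurable[P.F n] (fun ω => (P.A n ω i : ℝ)) :=
    (measurable_from_top (f := fun k : ℕ => (k:ℝ))).comp ((measurable_pi_apply i).comp (P.adaptedA n))
  have h2 : Measurable[P.F n] (fun ω => (P.X n ω i : ℝ)) :=
    (measurable_from_top (f := fun k : ℕ => (k:ℝ))).comp ((measurable_pi_apply i).comp (P.adaptedX n))
  exact (h1.sub (h2.div_const _)).stronglyMeasurable

theorem M_aesm (i n) : AEStronglyMeasurable (P.M i n) P.μ :=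
  ((M_sm i n).mono (P.F.le n)).aestronglyMeasurable

theorem Lin.inc (h : P.Lin) (i) : ∀ᵐ ω ∂P.μ, ∀ n, |P.M i (n + 1) ω - P.M i n ω| ≤ 1 := by
  filter_upwards [P.ae_bounds h.1 h.2] with ω hω n
  obtain ⟨a, b, c, d⟩ := hω n i
  have hm := P.mpos
  have a' : (P.X n ω i : ℝ) ≤ P.X (n + 1) ω i := by exact_mod_cast a
  have b' : (P.X (n + 1) ω i : ℝ) ≤ P.X n ω i + 2 * P.m := by exact_mod_cast b
  have c' : (P.A n ω i : ℝ) ≤ P.A (n + 1) ω i := by exact_mod_cast c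
  have d' : (P.A (n + 1) ω i : ℝ) ≤ P.A n ω i + 1 := by exact_mod_cast d
  have e : P.M i (n + 1) ω - P.M i n ω = (P.A (n + 1) ω i - P.A n ω i) -
      (P.X (n + 1) ω i - P.X n ω i) / (2 * P.m) := by unfold M; ring
  have f1 : 0 ≤ ((P.X (n + 1) ω i : ℝ) - P.X n ω i) / (2 * P.m) := div_nonneg (by linarith) (by linarith)
  have f2 : ((P.X (n + 1) ω i : ℝ) - P.X n ω i) / (2 * P.m) ≤ 1 := by
    rw [div_le_one (by linarith)]; linarith
  rw [e, abs_le]; constructor <;> linarith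

theorem Lin.M_bd (h : P.Lin) (i n) : ∀ᵐ ω ∂P.μ, |P.M i n ω| ≤ P.c0 i + n := by
  filter_upwards [h.inc i] with ω hω
  induction n with
  | zero => simp [M, c0, P.hA0, P.hX0]
  | succ n ih =>
    have := hω n
    have h2 := abs_add_le (P.M i n ω) (P.M i (n + 1) ω - P.M i n ω)
    rw [add_sub_cancel] at h2
    push_cast; linarith

theorem Lin.M_int (h : P.Lin) (i n) {w : Ω → ℝ} (hw : Integrable w P.μ) :
    Integrable (fun ω => w ω * P.M i n ω) P.μ :=
  hw.mul_bdd (c := P.c0 i + n) (M_aesm i n) (h.M_bd i n)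

theorem Lin.M_pow (h : P.Lin) (i n) (k : ℕ) : Integrable (fun ω => P.M i n ω ^ k) P.μ := by
  have := P.isProb
  induction k with
  | zero => simp
  | succ k ih => simpa only [pow_succ] using h.M_int i n ih

theorem Lin.M_mart (h : P.Lin) (i n) {w : Ω → ℝ}
    (hw : StronglyMeasurable[P.F n] w) (hwi : Integrable w P.μ) :
    ∫ ω, w ω * (P.M i (n + 1) ω - P.M i n ω) ∂P.μ = 0 := by
  have h1 := P.weight_A h.1 h.2 n i w hw hwi
  have h2 := P.weight_X h.1 h.2 n i w hw hwi
  have hm := P.mpos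
  have i0 : Integrable (fun ω => w ω * ((P.X (n + 1) ω i : ℝ) - P.X n ω i)) P.μ := by
    have := ((h.wDg hwi n (n+1) i).const_mul (P.S (n + 1) : ℝ)).add ((h.wx hwi n i).const_mul (2 * P.m : ℝ))
    refine this.congr (Eventually.of_forall fun ω => ?_)
    simp only [Pi.add_apply]
    rw [h.d_eq]; ring
  have i1 : Integrable (fun ω => w ω * (P.M i (n + 1) ω - P.M i n ω)) P.μ := by
    simp only [mul_sub]; exact (h.M_int i _ hwi).sub (h.M_int i _ hwi)
  have e : ∀ ω, w ω * ((P.A (n + 1) ω i : ℝ) - P.A n ω i) = w ω * (P.M i (n + 1) ω - P.M i n ω)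
      + (1 / (2 * P.m)) * (w ω * ((P.X (n + 1) ω i : ℝ) - P.X n ω i)) := by
    intro ω; unfold M; field_simp; ring
  simp_rw [e] at h1
  rw [integral_add i1 (i0.const_mul _), integral_const_mul, h2] at h1
  have e2 : ∀ ω, w ω * (2 * P.m * P.x n ω i) = (2 * P.m) * (w ω * P.x n ω i) := fun ω => by ring
  simp_rw [e2] at h1
  rw [integral_const_mul, ← mul_assoc, one_div, inv_mul_cancel₀ (by positivity), one_mul] at h1
  linarith

theorem Lin.M2 (h : P.Lin) (i n) : ∫ ω, P.M i n ω ^ 2 ∂P.μ ≤ P.c0 i ^ 2 + n := by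
  have := P.isProb
  induction n with
  | zero => simp [M, c0, P.hA0, P.hX0]
  | succ n ih =>
    have j1 : Integrable (P.M i n) P.μ := by simpa using h.M_pow i n 1
    have i1 : Integrable (fun ω => P.M i n ω * (P.M i (n + 1) ω - P.M i n ω)) P.μ := by
      simp only [mul_sub]; exact (h.M_int i _ j1).sub (h.M_int i _ j1)
    have key : ∫ ω, P.M i (n + 1) ω ^ 2 ∂P.μ ≤
        ∫ ω, (P.M i n ω ^ 2 + 2 * (P.M i n ω * (P.M i (n + 1) ω - P.M i n ω)) + 1) ∂P.μ := by
      refine integral_mono_ae (h.M_pow i _ 2) (((h.M_pow i n 2).add (i1.const_mul 2)).add (integrable_const _)) ?_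
      filter_upwards [h.inc i] with ω hω
      have := sq_le_one_iff_abs_le_one _ |>.2 (hω n)
      nlinarith
    rw [int3 (h.M_pow i n 2) (i1.const_mul 2) (integrable_const _), integral_const_mul,
      h.M_mart i n (M_sm i n) j1] at key
    simp at key
    push_cast; linarith

theorem Lin.M4 (h : P.Lin) (i n) : ∫ ω, P.M i n ω ^ 4 ∂P.μ ≤
    (P.c0 i ^ 4 + 8 * P.c0 i ^ 2 + 11) * ((n : ℝ) + 1) ^ 2 := by
  have := P.isProb
  induction n with
  | zero =>
    have e : ∀ ω, P.M i 0 ω ^ 4 = P.c0 i ^ 4 := by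
      intro ω; simp only [M, c0, P.hA0, P.hX0]
      rw [Even.pow_abs (by decide)]
    simp only [e]; simp; nlinarith [sq_nonneg (P.c0 i)]
  | succ n ih =>
    have j1 := h.M_pow i n 3
    have i1 : Integrable (fun ω => P.M i n ω ^ 3 * (P.M i (n + 1) ω - P.M i n ω)) P.μ := by
      simp only [mul_sub]; exact (h.M_int i _ j1).sub (h.M_int i _ j1)
    have i2 : Integrable (fun ω => 8 * P.M i n ω ^ 2 + 3) P.μ :=
      ((h.M_pow i n 2).const_mul 8).add (integrable_const _)
    have key : ∫ ω, P.M i (n + 1) ω ^ 4 ∂P.μ ≤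
        ∫ ω, (P.M i n ω ^ 4 + 4 * (P.M i n ω ^ 3 * (P.M i (n + 1) ω - P.M i n ω)) + (8 * P.M i n ω ^ 2 + 3)) ∂P.μ := by
      refine integral_mono_ae (h.M_pow i _ 4) (((h.M_pow i n 4).add (i1.const_mul 4)).add i2) ?_
      filter_upwards [h.inc i] with ω hω
      have hb := hω n
      have e : P.M i (n + 1) ω = P.M i n ω + (P.M i (n + 1) ω - P.M i n ω) := by ring
      set d := P.M i (n + 1) ω - P.M i n ω
      set a := P.M i n ω
      rw [e]
      have h2 := sq_le_one_iff_abs_le_one _ |>.2 hb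
      have h3 : d ^ 4 ≤ 1 := by nlinarith [sq_nonneg d]
      have h4 : a ^ 2 * d ^ 2 ≤ a ^ 2 := mul_le_of_le_one_right (sq_nonneg _) h2
      have h5 : a * d ^ 3 ≤ (a ^ 2 + 1) / 2 := by
        have : d ^ 6 ≤ 1 := by
          have : d ^ 6 = (d ^ 2) ^ 3 := by ring
          rw [this]; exact pow_le_one₀ (sq_nonneg _) h2
        nlinarith [sq_nonneg (a - d ^ 3)]
      nlinarith
    rw [int3 (h.M_pow i n 4) (i1.const_mul 4) i2, integral_const_mul,
      h.M_mart i n (w := fun ω => P.M i n ω ^ 3) ((M_sm i n).pow 3) j1,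
      integral_add ((h.M_pow i n 2).const_mul 8) (integrable_const _), integral_const_mul] at key
    simp at key
    have := h.M2 i n
    push_cast
    have hn : (0 : ℝ) ≤ n := Nat.cast_nonneg n
    have c4 : 0 ≤ P.c0 i ^ 4 := by positivity
    have c2 : 0 ≤ P.c0 i ^ 2 := by positivity
    nlinarith [mul_nonneg hn c4, mul_nonneg hn c2]

theorem Lin.M_lim (h : P.Lin) : ∀ᵐ ω ∂P.μ, ∀ i, Tendsto (fun n : ℕ => P.M i n ω / (n + 1)) atTop (nhds 0) := by
  rw [ae_all_iff]
  intro i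
  have := ae_tendsto_zero (μ := P.μ) (fun n ω => (P.M i n ω / (n + 1)) ^ 4) (fun n ω => by positivity)
    (fun n => by simp only [div_pow]; exact (h.M_pow i n 4).div_const _)
    (fun n => (P.c0 i ^ 4 + 8 * P.c0 i ^ 2 + 11) * (1 / ((n : ℝ) + 1) ^ 2))
    (by
      refine Summable.mul_left _ ?_
      have := (summable_nat_add_iff 1).2 (Real.summable_one_div_nat_pow.2 (le_refl 2))
      simpa using this)
    (fun n => by
      simp only [div_pow]
      rw [integral_div, div_le_iff₀ (by positivity)]
      refine (h.M4 i n).trans (le_of_eq ?_)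
      field_simp)
  filter_upwards [this] with ω hω
  have h2 := hω.sqrt.sqrt
  simp only [Real.sqrt_zero] at h2
  refine squeeze_zero_norm (fun n => le_of_eq ?_) h2
  have : (P.M i n ω / (n + 1)) ^ 4 = ((P.M i n ω / (n + 1)) ^ 2) ^ 2 := by ring
  rw [this, Real.sqrt_sq (sq_nonneg _), Real.sqrt_sq_eq_abs, Real.norm_eq_abs]

theorem Lin.a_lim (h : P.Lin) : ∀ᵐ ω ∂P.μ, Tendsto (fun n => P.a n ω) atTop (nhds (P.lim ω)) := by
  filter_upwards [h.M_lim, h.tendsto] with ω h1 h2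
  rw [tendsto_pi_nhds]
  intro i
  set c : ℝ := ((∑ i', P.A0 i' : ℕ) : ℝ) with hc
  have hm := P.mpos
  have t1 := tendsto_add_mul_div_add_mul_atTop_nhds (𝕜 := ℝ) 1 c 1 (d := 1) one_ne_zero
  have t2 := tendsto_add_mul_div_add_mul_atTop_nhds (𝕜 := ℝ) ((∑ i', P.X0 i' : ℕ) : ℝ) (2 * P.m * c) (2 * P.m) (d := 2 * P.m) (by positivity)
  have t3 := ((h1 i).mul t1).add ((h2 i).mul t2)
  rw [zero_mul, zero_add, div_self (by positivity), mul_one] at t3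
  refine t3.congr' ?_
  filter_upwards [eventually_gt_atTop 0] with n hn
  have hn' : (0 : ℝ) < n := by exact_mod_cast hn
  have hS := h.Spos n
  have hSe : (P.S n : ℝ) = (∑ i', P.X0 i' : ℕ) + 2 * P.m * n := by simp [S]
  have hcn : 0 ≤ c := by positivity
  rw [← hSe]
  simp only [M, x, a, ← hc]
  field_simp
  ring

theorem Lin.reach (h : P.Lin) (n : ℕ) : ∀ k : Fin P.N → ℕ, ∑ j, k j = n →
    0 < P.μ {ω | P.X n ω = fun j => P.X0 j + 2 * P.m * k j} := by
  have := P.isProb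
  induction n with
  | zero =>
    intro k hk
    have hk' : ∀ j, k j = 0 := by simpa using hk
    simp [hk', P.hX0]
  | succ n ih =>
    intro k hk
    obtain ⟨i, hi⟩ : ∃ i, 0 < k i := by
      by_contra hh
      push Not at hh
      rw [Finset.sum_eq_zero fun j _ => Nat.le_zero.1 (hh j)] at hk
      omega
    set k' : Fin P.N → ℕ := fun j => k j - if j = i then 1 else 0 with hk'
    have hkk : ∀ j, k j = k' j + if j = i then 1 else 0 := by
      intro j; simp only [hk']; split_ifs with hj
      · subst hj; omega
      · simp
    have hs : ∑ j, k' j = n := by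
      have : ∑ j, k j = ∑ j, k' j + 1 := by
        rw [Finset.sum_congr rfl fun j _ => hkk j, Finset.sum_add_distrib]; simp
      omega
    have hB := ih k' hs
    set B := {ω | P.X n ω = fun j => P.X0 j + 2 * P.m * k' j} with hBdef
    have hBm : MeasurableSet[P.F n] B := (P.adaptedX n) (measurableSet_singleton _)
    have hBm' := P.F.le n B hBm
    set t : (Fin P.N → ℕ) × Fin P.N := (Pi.single i P.m, i) with ht
    have htu : Pi.single i P.m ∈ Finset.Nat.antidiagonalTuple P.N P.m := by
      rw [Finset.Nat.mem_antidiagonalTuple]; simp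
    have htT : t ∈ P.T := Finset.mem_product.2 ⟨htu, Finset.mem_univ _⟩
    have hsub : B ∩ P.E n t ⊆ {ω | P.X (n + 1) ω = fun j => P.X0 j + 2 * P.m * k j} := by
      rintro ω ⟨hb, he⟩
      funext j
      have := he.2 j
      rw [this, hb, hkk j]
      by_cases hj : j = i
      · subst hj; simp [ht]; ring
      · simp [ht, hj]
    refine lt_of_lt_of_le ?_ (measure_mono hsub)
    have hw := P.integral_weight n (fun s => if s = t then 1 else 0) (B.indicator fun _ => 1)
      (stronglyMeasurable_const.indicator hBm) ((integrable_const _).indicator hBm')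
    simp only [ite_mul, one_mul, zero_mul, Finset.sum_ite_eq', htT, if_true] at hw
    set y : Fin P.N → ℝ := fun j => ((P.X0 j + 2 * P.m * k' j : ℕ) : ℝ) / P.S n with hy
    have e1 : ∀ ω, B.indicator (fun _ => (1 : ℝ)) ω * (P.E n t).indicator (fun _ => 1) ω
        = (B ∩ P.E n t).indicator (fun _ => 1) ω := by
      intro ω; by_cases h1 : ω ∈ B <;> by_cases h2 : ω ∈ P.E n t <;> simp [h1, h2]
    have e2 : ∀ ω, B.indicator (fun _ => (1 : ℝ)) ω * P.q (P.x n ω) t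
        = B.indicator (fun _ => P.q y t) ω := by
      intro ω; by_cases h1 : ω ∈ B
      · have : P.x n ω = y := by
          funext j; simp only [x, hy]; rw [show P.X n ω = _ from h1]
        simp [h1, this]
      · simp [h1]
    simp_rw [e1, e2] at hw
    rw [integral_indicator_const _ (hBm'.inter (P.measE n t)), integral_indicator_const _ hBm'] at hw
    have hq : 0 < P.q y t := by
      unfold q
      have hm := P.mpos
      have hS := h.Spos n
      rw [h.1 _ htu]
      refine mul_pos (mul_pos ?_ (Finset.prod_pos fun j _ => pow_pos ?_ _)) ?_
      · exact_mod_cast Nat.multinomial_pos _ _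
      · simp only [hy]
        have := h.2 j
        refine div_pos ?_ hS
        have h' : 0 < P.X0 j + 2 * P.m * k' j := Nat.add_pos_left (h.2 j) _
        exact_mod_cast h'
      · simp only [ht, Pi.single_eq_same]
        exact div_pos (by linarith) (by linarith)
    have hBr : 0 < P.μ.real B := ENNReal.toReal_pos hB.ne' (measure_ne_top _ _)
    simp only [smul_eq_mul, mul_one] at hw
    have : 0 < P.μ.real (B ∩ P.E n t) := by rw [hw]; positivity
    exact (ENNReal.toReal_pos_iff.1 this).1


theorem Lin.support_pt (h : P.Lin) (y : Fin P.N → ℝ) (hy : y ∈ stdSimplex ℝ (Fin P.N)) (ε : ℝ) (hε : 0 < ε)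
    (δ : ℝ) (hδ : 0 < δ) :
    ∃ k : Fin P.N → ℕ, (∀ j, |((P.X0 j + 2 * P.m * k j : ℕ) : ℝ) / P.S (∑ j, k j) - y j| < ε) ∧
      1 / (P.S (∑ j, k j) : ℝ) < δ := by
  have hm := P.mpos
  have t1 : ∀ j, Tendsto (fun t : ℕ => ((⌊y j * t⌋₊ : ℕ) : ℝ) / t) atTop (nhds (y j)) := fun j =>
    (tendsto_nat_floor_mul_div_atTop (hy.1 j)).comp tendsto_natCast_atTop_atTop
  have t2 : ∀ c : ℝ, Tendsto (fun t : ℕ => c / (t : ℝ)) atTop (nhds 0) := fun c =>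
    tendsto_const_div_atTop_nhds_zero_nat c
  have t3 : Tendsto (fun t : ℕ => (P.S (∑ j, ⌊y j * t⌋₊) : ℝ) / t) atTop (nhds (2 * P.m)) := by
    have := (t2 (∑ j, P.X0 j : ℕ)).add ((tendsto_finsetSum Finset.univ fun j _ => t1 j).const_mul (2 * (P.m : ℝ)))
    rw [hy.2, zero_add, mul_one] at this
    refine this.congr fun t => ?_
    rw [← Finset.sum_div]
    simp only [S]; push_cast; ring
  have t4 : ∀ j, Tendsto (fun t : ℕ => ((P.X0 j + 2 * P.m * ⌊y j * t⌋₊ : ℕ) : ℝ) / t) atTop (nhds (2 * P.m * y j)) := by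
    intro j
    have := (t2 (P.X0 j)).add ((t1 j).const_mul (2 * (P.m : ℝ)))
    rw [zero_add] at this
    refine this.congr fun t => ?_
    push_cast; ring
  have hne : (2 * (P.m : ℝ)) ≠ 0 := by positivity
  have t5 : ∀ j, Tendsto (fun t : ℕ => ((P.X0 j + 2 * P.m * ⌊y j * t⌋₊ : ℕ) : ℝ) / P.S (∑ j, ⌊y j * t⌋₊)) atTop (nhds (y j)) := by
    intro j
    have := (t4 j).div t3 hne
    rw [mul_div_cancel_left₀ _ hne] at this
    refine this.congr' ?_
    filter_upwards [eventually_gt_atTop 0] with t ht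
    have : (t : ℝ) ≠ 0 := by positivity
    simp only [Pi.div_apply]
    rw [div_div_div_cancel_right₀ this]
  have t6 : Tendsto (fun t : ℕ => 1 / (P.S (∑ j, ⌊y j * t⌋₊) : ℝ)) atTop (nhds 0) := by
    have := (t2 1).div t3 hne
    rw [zero_div] at this
    refine this.congr' ?_
    filter_upwards [eventually_gt_atTop 0] with t ht
    have : (t : ℝ) ≠ 0 := by positivity
    simp only [Pi.div_apply]
    rw [div_div_div_cancel_right₀ this]
  have e1 : ∀ᶠ t : ℕ in atTop, ∀ j, |((P.X0 j + 2 * P.m * ⌊y j * t⌋₊ : ℕ) : ℝ) / P.S (∑ j, ⌊y j * t⌋₊) - y j| < ε := by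
    rw [eventually_all]
    intro j
    have := (Metric.tendsto_nhds.1 (t5 j)) ε hε
    simpa only [Real.dist_eq] using this
  obtain ⟨t, ht1, ht2⟩ := (e1.and (t6.eventually_lt_const hδ)).exists
  exact ⟨fun j => ⌊y j * t⌋₊, ht1, ht2⟩

theorem Lin.support (h : P.Lin) (y : Fin P.N → ℝ) (hy : y ∈ stdSimplex ℝ (Fin P.N)) (ε : ℝ) (hε : 0 < ε) :
    0 < P.μ {ω | dist (P.lim ω) y < ε} := by
  have := P.isProb
  have hm := P.mpos
  have hN : (0 : ℝ) < P.N := by have := P.hN; positivity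
  obtain ⟨k, hk1, hk2⟩ := h.support_pt y hy (ε / 2) (by positivity)
    ((ε / 2) ^ 2 / (P.N * ((P.m + 3) / 2))) (by positivity)
  set n := ∑ j, k j
  have hB := h.reach n k rfl
  set B := {ω | P.X n ω = fun j => P.X0 j + 2 * P.m * k j} with hBdef
  have hBm : MeasurableSet[P.F n] B := (P.adaptedX n) (measurableSet_singleton _)
  have hBm' := P.F.le n B hBm
  have hBr : 0 < P.μ.real B := ENNReal.toReal_pos hB.ne' (measure_ne_top _ _)
  rw [pos_iff_ne_zero]
  intro h0
  have hae : ∀ᵐ ω ∂P.μ, ε ≤ dist (P.lim ω) y := by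
    rw [ae_iff]; simpa only [not_le] using h0
  set w : Ω → ℝ := B.indicator fun _ => 1 with hw
  have hwm : StronglyMeasurable[P.F n] w := stronglyMeasurable_const.indicator hBm
  have hwi : Integrable w P.μ := (integrable_const _).indicator hBm'
  have hw0 : ∀ ω, 0 ≤ w ω := fun ω => Set.indicator_nonneg (fun _ _ => zero_le_one) ω
  have hwint : ∫ ω, w ω ∂P.μ = P.μ.real B := by
    rw [hw, integral_indicator_const _ hBm']; simp
  have h1 : ∀ j, ∫ ω, w ω * (P.lim ω j - P.x n ω j) ^ 2 ∂P.μ ≤ (P.m + 3) / 2 * (1 / P.S n) * P.μ.real B := by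
    intro j
    refine (h.var_lim n j hwm hwi hw0).trans ?_
    have hS := h.Spos n
    refine mul_le_mul_of_nonneg_left ?_ (by positivity)
    rw [← hwint]
    exact integral_mono (h.wx hwi n j) hwi fun ω => mul_le_of_le_one_right (hw0 ω) (P.x_le_one h.2 n ω j)
  have h2 : (ε / 2) ^ 2 * P.μ.real B ≤ ∑ j, ∫ ω, w ω * (P.lim ω j - P.x n ω j) ^ 2 ∂P.μ := by
    rw [← integral_finsetSum _ fun j _ => h.wlim n j hwi, ← hwint, ← integral_const_mul]
    refine integral_mono_ae (hwi.const_mul _) (integrable_finsetSum _ fun j _ => h.wlim n j hwi) ?_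
    filter_upwards [hae] with ω hω
    by_cases hb : ω ∈ B
    · have hx : ∀ j, |P.x n ω j - y j| < ε / 2 := by
        intro j
        have := hk1 j
        simp only [x]; rw [show P.X n ω = _ from hb]; exact this
      have : ∃ j, ε ≤ |P.lim ω j - y j| := by
        by_contra hh
        push Not at hh
        have : dist (P.lim ω) y < ε := (dist_pi_lt_iff hε).2 fun j => by rw [Real.dist_eq]; exact hh j
        linarith
      obtain ⟨j, hj⟩ := this
      have h3 : ε / 2 ≤ |P.lim ω j - P.x n ω j| := by
        have := abs_sub_le (P.lim ω j) (P.x n ω j) (y j)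
        have := hx j
        linarith
      have h4 : (ε / 2) ^ 2 ≤ (P.lim ω j - P.x n ω j) ^ 2 := by
        rw [← sq_abs (P.lim ω j - P.x n ω j)]; exact pow_le_pow_left₀ (by positivity) h3 2
      have h5 : (P.lim ω j - P.x n ω j) ^ 2 ≤ ∑ j, (P.lim ω j - P.x n ω j) ^ 2 :=
        Finset.single_le_sum (f := fun j => (P.lim ω j - P.x n ω j) ^ 2) (fun _ _ => sq_nonneg _) (Finset.mem_univ j)
      simp only [hw, Set.indicator_of_mem hb, one_mul, mul_one]
      linarith
    · simp [hw, hb]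
  have h3 : ∑ j, ∫ ω, w ω * (P.lim ω j - P.x n ω j) ^ 2 ∂P.μ ≤ P.N * ((P.m + 3) / 2 * (1 / P.S n) * P.μ.real B) := by
    refine (Finset.sum_le_sum fun j _ => h1 j).trans (le_of_eq ?_)
    simp
  have h4 := h2.trans h3
  rw [lt_div_iff₀ (by positivity)] at hk2
  nlinarith

theorem seq_small (e : ℕ → ℝ) (κ : ℝ) (hκ : 0 < κ) (h0 : ∀ n, 0 ≤ e n)
    (h : ∀ n, e (n + 1) ≤ e n - κ * e n ^ 2 / ((n : ℝ) + 1)) (δ : ℝ) (hδ : 0 < δ) : ∃ n, e n < δ := by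
  by_contra hh
  push Not at hh
  have h1 : ∀ n, e n ≤ e 0 - κ * δ ^ 2 * ∑ i ∈ Finset.range n, 1 / ((i : ℝ) + 1) := by
    intro n
    induction n with
    | zero => simp
    | succ n ih =>
      rw [Finset.sum_range_succ]
      have h2 : κ * δ ^ 2 * (1 / ((n : ℝ) + 1)) ≤ κ * e n ^ 2 / ((n : ℝ) + 1) := by
        rw [mul_one_div]
        have := pow_le_pow_left₀ hδ.le (hh n) 2
        gcongr
      have := h n
      rw [mul_add]; linarith
  have h2 := (Real.tendsto_sum_range_one_div_nat_succ_atTop.const_mul_atTop (show 0 < κ * δ ^ 2 by positivity)).eventually_gt_atTop (e 0)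
  obtain ⟨n, hn⟩ := h2.exists
  have := h1 n
  have := h0 n
  linarith

theorem X_le (n ω i) : P.X n ω i ≤ P.S n := by
  have := P.hXsum n ω
  unfold S
  rw [← this]
  exact Finset.single_le_sum (f := P.X n ω) (fun _ _ => Nat.zero_le _) (Finset.mem_univ _)

theorem f_sm (n i) (f : ℕ → ℝ) : StronglyMeasurable[P.F n] (fun ω => f (P.X n ω i)) :=
  ((measurable_from_top (f := f)).comp ((measurable_pi_apply i).comp (P.adaptedX n))).stronglyMeasurable

theorem f_int (n i) (f : ℕ → ℝ) : Integrable (fun ω => f (P.X n ω i)) P.μ := by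
  have := P.isProb
  refine Integrable.of_bound ((f_sm n i f).mono (P.F.le n)).aestronglyMeasurable
    (∑ k ∈ Finset.range (P.S n + 1), |f k|) (Eventually.of_forall fun ω => ?_)
  rw [Real.norm_eq_abs]
  exact Finset.single_le_sum (f := fun k => |f k|) (fun _ _ => abs_nonneg _)
    (Finset.mem_range.2 (Nat.lt_succ_of_le (X_le n ω i)))

theorem g_sm (n i) (f : ℝ → ℝ) : StronglyMeasurable[P.F n] (fun ω => f (P.x n ω i)) :=
  f_sm n i fun k => f ((k : ℝ) / P.S n)

theorem g_int (n i) (f : ℝ → ℝ) : Integrable (fun ω => f (P.x n ω i)) P.μ :=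
  f_int n i fun k => f ((k : ℝ) / P.S n)

theorem Lin.X_pos (h : P.Lin) : ∀ᵐ ω ∂P.μ, ∀ n i, 1 ≤ P.X n ω i := by
  filter_upwards [P.ae_bounds h.1 h.2] with ω hω n i
  induction n with
  | zero => rw [P.hX0]; exact h.2 i
  | succ n ih => exact ih.trans (hω n i).1

theorem Lin.S_le (h : P.Lin) (n : ℕ) : (P.S (n + 1) : ℝ) ≤ P.S 1 * ((n : ℝ) + 1) := by
  simp only [S]; push_cast
  have : (0 : ℝ) ≤ ∑ i, (P.X0 i : ℝ) := Finset.sum_nonneg fun _ _ => Nat.cast_nonneg _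
  have hn : (0 : ℝ) ≤ n := Nat.cast_nonneg n
  nlinarith [mul_nonneg this hn]

theorem Lin.atom0 (h : P.Lin) (i) : P.μ {ω | P.lim ω i = 0} = 0 := by
  have := P.isProb
  have hm := P.mpos
  set e : ℕ → ℝ := fun n => ∫ ω, 1 / (P.X n ω i : ℝ) ∂P.μ with he
  have he0 : ∀ n, 0 ≤ e n := fun n => integral_nonneg fun ω => by positivity
  have he1 : ∀ n, e n ≤ 1 := by
    intro n
    have : e n ≤ ∫ ω, (1 : ℝ) ∂P.μ := by
      refine integral_mono_ae (f_int n i fun k => 1 / (k : ℝ)) (integrable_const _) ?_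
      filter_upwards [h.X_pos] with ω hω
      have : (1 : ℝ) ≤ P.X n ω i := by exact_mod_cast hω n i
      exact (div_le_one (by linarith)).2 this
    simpa using this
  have hS1 := h.Spos 1
  have hrec : ∀ n, e (n + 1) ≤ e n - (2 * P.m / (1 + 2 * P.m) / P.S 1) * e n ^ 2 / ((n : ℝ) + 1) := by
    intro n
    have hS := h.Spos n
    have hSS := P.S_succ n
    set w : Ω → ℝ := fun ω => 1 / ((P.X n ω i : ℝ) * (P.X n ω i + 2 * P.m)) with hw
    have hwm : StronglyMeasurable[P.F n] w := f_sm n i fun k => 1 / ((k : ℝ) * (k + 2 * P.m))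
    have hwi : Integrable w P.μ := f_int n i fun k => 1 / ((k : ℝ) * (k + 2 * P.m))
    have hwX := P.weight_X h.1 h.2 n i w hwm hwi
    have i0 : Integrable (fun ω => w ω * ((P.X (n + 1) ω i : ℝ) - P.X n ω i)) P.μ := by
      have := ((h.wDg hwi n (n+1) i).const_mul (P.S (n + 1) : ℝ)).add ((h.wx hwi n i).const_mul (2 * P.m : ℝ))
      refine this.congr (Eventually.of_forall fun ω => ?_)
      simp only [Pi.add_apply]
      rw [h.d_eq]; ring
    have a1 : e (n + 1) ≤ e n - ∫ ω, w ω * ((P.X (n + 1) ω i : ℝ) - P.X n ω i) ∂P.μ := by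
      rw [he]; simp only
      rw [← integral_sub (f_int n i fun k => 1 / (k : ℝ)) i0]
      refine integral_mono_ae (f_int (n + 1) i fun k => 1 / (k : ℝ)) ((f_int n i fun k => 1 / (k : ℝ)).sub i0) ?_
      filter_upwards [h.X_pos, P.ae_bounds h.1 h.2] with ω h1 h2
      obtain ⟨b1, b2, -, -⟩ := h2 n i
      have b0 : (1 : ℝ) ≤ P.X n ω i := by exact_mod_cast h1 n i
      have b1' : (P.X n ω i : ℝ) ≤ P.X (n + 1) ω i := by exact_mod_cast b1
      have b2' : (P.X (n + 1) ω i : ℝ) ≤ P.X n ω i + 2 * P.m := by exact_mod_cast b2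
      simp only [hw]
      generalize (P.X n ω i : ℝ) = a at *
      generalize (P.X (n + 1) ω i : ℝ) = b at *
      have : 1 / b = 1 / a - 1 / (a * b) * (b - a) := by
        have : a ≠ 0 := by linarith
        have : b ≠ 0 := by linarith
        field_simp; ring
      rw [this]
      have : 1 / (a * (a + 2 * P.m)) ≤ 1 / (a * b) :=
        one_div_le_one_div_of_le (mul_pos (by linarith) (by linarith)) (mul_le_mul_of_nonneg_left b2' (by linarith))
      have := mul_le_mul_of_nonneg_right this (sub_nonneg.2 b1')
      linarith
    have a2 : 2 * P.m / (1 + 2 * P.m) / P.S n * e n ≤ ∫ ω, w ω * (2 * P.m * P.x n ω i) ∂P.μ := by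
      rw [he]; simp only
      rw [← integral_const_mul]
      refine integral_mono_ae ((f_int n i fun k => 1 / (k : ℝ)).const_mul _)
        (f_int n i fun k => 1 / ((k : ℝ) * (k + 2 * P.m)) * (2 * P.m * (k / P.S n))) ?_
      filter_upwards [h.X_pos] with ω h1
      have b0 : (1 : ℝ) ≤ P.X n ω i := by exact_mod_cast h1 n i
      simp only [hw, x]
      generalize (P.X n ω i : ℝ) = a at *
      have e1 : 1 / (a * (a + 2 * P.m)) * (2 * P.m * (a / P.S n)) = 2 * P.m / P.S n * (1 / (a + 2 * P.m)) := by
        field_simp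
      have e2 : 2 * P.m / (1 + 2 * P.m) / P.S n * (1 / a) = 2 * P.m / P.S n * (1 / (a * (1 + 2 * P.m))) := by
        field_simp
      rw [e1, e2]
      refine mul_le_mul_of_nonneg_left (one_div_le_one_div_of_le (by positivity) ?_) (by positivity)
      nlinarith
    have a3 : (2 * P.m / (1 + 2 * P.m) / P.S 1) * e n ^ 2 / ((n : ℝ) + 1) ≤ 2 * P.m / (1 + 2 * P.m) / P.S n * e n := by
      have hle := h.S_le n
      have b1 : e n ^ 2 ≤ e n := by nlinarith [he0 n, he1 n]
      have : (2 * P.m / (1 + 2 * P.m) / P.S 1) * e n ^ 2 / ((n : ℝ) + 1) =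
        2 * P.m / (1 + 2 * P.m) / (P.S 1 * ((n : ℝ) + 1)) * e n ^ 2 := by field_simp
      rw [this]
      refine mul_le_mul ?_ b1 (sq_nonneg _) (by positivity)
      refine div_le_div_of_nonneg_left (by positivity) hS (by linarith)
    linarith
  have hbd : ∀ n, P.μ.real {ω | P.lim ω i = 0} ≤ ((P.m : ℝ) + 3) / 2 * e n := by
    intro n
    have hS := h.Spos n
    have hv := h.var_lim n i (w := fun ω => 1 / P.x n ω i ^ 2) (g_sm n i fun z => 1 / z ^ 2)
      (g_int n i fun z => 1 / z ^ 2) (fun ω => by positivity)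
    have hms : MeasurableSet {ω | P.lim ω i = 0} := (P.lim_sm i).measurable (measurableSet_singleton 0)
    have b1 : P.μ.real {ω | P.lim ω i = 0} ≤ ∫ ω, 1 / P.x n ω i ^ 2 * (P.lim ω i - P.x n ω i) ^ 2 ∂P.μ := by
      have : P.μ.real {ω | P.lim ω i = 0} = ∫ ω, ({ω | P.lim ω i = 0} : Set Ω).indicator (fun _ => (1 : ℝ)) ω ∂P.μ := by
        rw [integral_indicator_const _ hms]; simp
      rw [this]
      refine integral_mono_ae ((integrable_const _).indicator hms) (h.wlim n i (g_int n i fun z => 1 / z ^ 2)) ?_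
      filter_upwards [h.X_pos] with ω h1
      by_cases hω : P.lim ω i = 0
      · have hx : 0 < P.x n ω i := div_pos (by exact_mod_cast h1 n i) hS
        rw [Set.indicator_of_mem (show ω ∈ {ω | P.lim ω i = 0} from hω), hω]
        rw [zero_sub, neg_sq, one_div_mul_cancel (by positivity)]
      · rw [Set.indicator_of_notMem (show ω ∉ {ω | P.lim ω i = 0} from hω)]
        positivity
    have b2 : ∫ ω, 1 / P.x n ω i ^ 2 * P.x n ω i ∂P.μ = P.S n * e n := by
      rw [he]; simp only
      rw [← integral_const_mul]
      refine integral_congr_ae ?_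
      filter_upwards [h.X_pos] with ω h1
      have : (1 : ℝ) ≤ P.X n ω i := by exact_mod_cast h1 n i
      simp only [x]
      field_simp
    rw [b2] at hv
    refine b1.trans (hv.trans (le_of_eq ?_))
    field_simp
  have hz : P.μ.real {ω | P.lim ω i = 0} ≤ 0 := by
    refine le_of_forall_pos_lt_add fun δ hδ => ?_
    obtain ⟨n, hn⟩ := seq_small e _ (by positivity) he0 hrec (δ / (((P.m : ℝ) + 3) / 2)) (by positivity)
    rw [lt_div_iff₀ (by positivity)] at hn
    have := hbd n
    linarith
  exact (measureReal_eq_zero_iff).1 (le_antisymm hz measureReal_nonneg)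

theorem real_step (m K s s' z D : ℝ) (hm : 1 ≤ m) (hK : 0 < K) (hs : 0 < s) (hs' : s' = s + 2 * m)
    (hD : s' ^ 2 * D ^ 2 ≤ 4 * m ^ 2) (hz : z ^ 2 ≤ 1) :
    1 / (K + s' * (z + D) ^ 2) ≤
      (1 / (K + s * z ^ 2) - (1 / (K + s * z ^ 2) ^ 2) * (2 * m * z ^ 2 - 12 * m ^ 2 * z ^ 2 / K))
      + (-(2 * s' * z) * (1 / (K + s * z ^ 2) ^ 2)) * D
      + (-((1 / (K + s * z ^ 2) ^ 2) * (s' - (12 * s' ^ 2 * z ^ 2 + 12 * m ^ 2) / K))) * D ^ 2 := by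
  have hsp : 0 < s' := by linarith
  set Q := K + s * z ^ 2 with hQ
  set Q' := K + s' * (z + D) ^ 2 with hQ'
  have h1 : 0 < Q := by positivity
  have h2 : K ≤ Q' := by
    have : 0 ≤ s' * (z + D) ^ 2 := by positivity
    linarith
  have h2' : 0 < Q' := by linarith
  set E := 2 * m * z ^ 2 + 2 * s' * z * D + s' * D ^ 2 with hE
  have hQE : Q' = Q + E := by rw [hQ', hQ, hE, hs']; ring
  have e1 : 1 / Q' = 1 / Q - E / Q ^ 2 + E ^ 2 / (Q ^ 2 * Q') := by
    have : E = Q' - Q := by linarith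
    rw [this]; field_simp; ring
  have e2 : E ^ 2 / (Q ^ 2 * Q') ≤ E ^ 2 / (Q ^ 2 * K) := by gcongr
  have e3 : E ^ 2 ≤ 12 * m ^ 2 * z ^ 2 + 12 * s' ^ 2 * z ^ 2 * D ^ 2 + 12 * m ^ 2 * D ^ 2 := by
    have a1 : E ^ 2 ≤ 3 * ((2 * m * z ^ 2) ^ 2 + (2 * s' * z * D) ^ 2 + (s' * D ^ 2) ^ 2) := by
      rw [hE]
      nlinarith [sq_nonneg (2 * m * z ^ 2 - 2 * s' * z * D), sq_nonneg (2 * m * z ^ 2 - s' * D ^ 2), sq_nonneg (2 * s' * z * D - s' * D ^ 2)]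
    have a2 : (s' * D ^ 2) ^ 2 ≤ 4 * m ^ 2 * D ^ 2 := by
      nlinarith [mul_le_mul_of_nonneg_right hD (sq_nonneg D)]
    have a3 : (2 * m * z ^ 2) ^ 2 ≤ 4 * m ^ 2 * z ^ 2 := by
      nlinarith [mul_le_mul_of_nonneg_left hz (show 0 ≤ 4 * m ^ 2 * z ^ 2 by positivity)]
    nlinarith
  have e4 : E ^ 2 / (Q ^ 2 * K) ≤ (12 * m ^ 2 * z ^ 2 + 12 * s' ^ 2 * z ^ 2 * D ^ 2 + 12 * m ^ 2 * D ^ 2) / (Q ^ 2 * K) := by gcongr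
  rw [e1]
  have e5 : (1 / Q - (1 / Q ^ 2) * (2 * m * z ^ 2 - 12 * m ^ 2 * z ^ 2 / K))
      + (-(2 * s' * z) * (1 / Q ^ 2)) * D
      + (-((1 / Q ^ 2) * (s' - (12 * s' ^ 2 * z ^ 2 + 12 * m ^ 2) / K))) * D ^ 2 
      = 1 / Q - E / Q ^ 2 + (12 * m ^ 2 * z ^ 2 + 12 * s' ^ 2 * z ^ 2 * D ^ 2 + 12 * m ^ 2 * D ^ 2) / (Q ^ 2 * K) := by
    rw [hE]; field_simp; ring
  rw [e5]; linarith

theorem real_brk (m K s' x c κ G g : ℝ) (hm : 1 ≤ m) (hK : K = 24 * (m ^ 2 + (m ^ 2 + 3 * m))) (hs' : 1 ≤ s')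
    (hx0 : 0 ≤ x) (hx1 : x ≤ 1) (hκ1 : κ ≤ c ^ 2) (hκ2 : κ ≤ (1 - c) ^ 2) (hG : 0 ≤ G) :
    (g - G * (2 * m * (x - c) ^ 2 - 12 * m ^ 2 * (x - c) ^ 2 / K)) +
    (m ^ 2 + 3 * m) / s' ^ 2 * ((-(G * (s' - (12 * s' ^ 2 * (x - c) ^ 2 + 12 * m ^ 2) / K))) * (x * (1 - x)))
     ≤ g - κ / s' * G := by
  set V := m ^ 2 + 3 * m with hV
  have hVm : 4 ≤ V := by nlinarith
  have hKp : 0 < K := by rw [hK]; positivity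
  set b := x * (1 - x) with hb
  have hb0 : 0 ≤ b := mul_nonneg hx0 (by linarith)
  have hb1 : b ≤ 1 := by nlinarith
  set Z := (x - c) ^ 2 with hZ
  have hZ0 : 0 ≤ Z := sq_nonneg _
  have hk : κ ≤ Z + b := by
    have : Z + b = c ^ 2 * (1 - x) + (1 - c) ^ 2 * x := by rw [hZ, hb]; ring
    rw [this]; nlinarith
  have hα : 12 * m ^ 2 / K ≤ 1 / 2 := by rw [div_le_iff₀ hKp, hK]; nlinarith
  have hβ : 12 * V / K ≤ 1 / 2 := by rw [div_le_iff₀ hKp, hK]; nlinarith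
  set α := 12 * m ^ 2 / K with hαd
  set β := 12 * V / K with hβd
  have hα0 : 0 ≤ α := by positivity
  have hβ0 : 0 ≤ β := by positivity
  set t := 1 / s' with ht
  have ht0 : 0 < t := by positivity
  have ht1 : t ≤ 1 := by rw [ht, div_le_one (by linarith)]; exact hs'
  have hmain : κ * t ≤ Z * (2 * m - α - β * b) + V * b * t * (1 - α * t) := by
    have a1 : Z ≤ Z * (2 * m - α - β * b) := by
      have : β * b ≤ 1 / 2 := by nlinarith
      nlinarith
    have a2 : b * t ≤ V * b * t * (1 - α * t) := by
      have h1 : 1 / 2 ≤ 1 - α * t := by nlinarith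
      have h2 : 0 ≤ b * t := by positivity
      have : 1 ≤ V * (1 - α * t) := by nlinarith
      nlinarith
    have a3 : κ * t ≤ (Z + b) * t := by gcongr
    nlinarith
  have e : (g - G * (2 * m * Z - 12 * m ^ 2 * Z / K)) +
    V / s' ^ 2 * ((-(G * (s' - (12 * s' ^ 2 * Z + 12 * m ^ 2) / K))) * b)
    = g - G * (Z * (2 * m - α - β * b) + V * b * t * (1 - α * t)) := by
    rw [hαd, hβd, ht]; field_simp; ring
  rw [e]
  have : κ / s' * G = G * (κ * t) := by rw [ht]; ring
  rw [this]
  have := mul_le_mul_of_nonneg_left hmain hG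
  linarith

theorem Lin.atom_c (h : P.Lin) (i) (c : ℝ) (hc0 : 0 < c) (hc1 : c < 1) : P.μ {ω | P.lim ω i = c} = 0 := by
  have := P.isProb
  have hm := P.mpos
  set m : ℝ := (P.m : ℝ) with hmdef
  set K : ℝ := 24 * (m ^ 2 + (m ^ 2 + 3 * m)) with hK
  have hKp : 0 < K := by positivity
  set κ : ℝ := min (c ^ 2) ((1 - c) ^ 2) with hκ
  have hκp : 0 < κ := lt_min (by positivity) (pow_pos (by linarith) 2)
  set g : ℕ → ℝ → ℝ := fun n y => 1 / (K + P.S n * (y - c) ^ 2) with hg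
  have hg0 : ∀ n y, 0 ≤ g n y := fun n y => by
    have := h.Spos n
    simp only [hg]; positivity
  set e : ℕ → ℝ := fun n => ∫ ω, g n (P.x n ω i) ∂P.μ with he
  have he0 : ∀ n, 0 ≤ e n := fun n => integral_nonneg fun ω => hg0 _ _
  have hS1 := h.Spos 1
  have hrec : ∀ n, e (n + 1) ≤ e n - (κ / P.S 1) * e n ^ 2 / ((n : ℝ) + 1) := by
    intro n
    have hS := h.Spos n
    have hS' := h.Spos (n + 1)
    have hSS := P.S_succ n
    rw [← hmdef] at hSS
    set s : ℝ := (P.S n : ℝ) with hs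
    set s' : ℝ := (P.S (n + 1) : ℝ) with hs'
    set f0 : ℝ → ℝ := fun y => 1 / (K + s * (y - c) ^ 2) - (1 / (K + s * (y - c) ^ 2) ^ 2) * (2 * m * (y - c) ^ 2 - 12 * m ^ 2 * (y - c) ^ 2 / K) with hf0
    set f1 : ℝ → ℝ := fun y => -(2 * s' * (y - c)) * (1 / (K + s * (y - c) ^ 2) ^ 2) with hf1
    set f2 : ℝ → ℝ := fun y => -((1 / (K + s * (y - c) ^ 2) ^ 2) * (s' - (12 * s' ^ 2 * (y - c) ^ 2 + 12 * m ^ 2) / K)) with hf2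
    have j1 := h.wDg (g_int n i f1) n (n + 1) i
    have j2 := h.wD2g (g_int n i f2) n (n + 1) i
    have a1 : e (n + 1) ≤ ∫ ω, (f0 (P.x n ω i) + f1 (P.x n ω i) * (P.x (n + 1) ω i - P.x n ω i)
        + f2 (P.x n ω i) * (P.x (n + 1) ω i - P.x n ω i) ^ 2) ∂P.μ := by
      refine integral_mono_ae (g_int (n + 1) i (g (n + 1))) (((g_int n i f0).add j1).add j2) ?_
      filter_upwards [P.ae_bounds h.1 h.2] with ω h2
      obtain ⟨b1, b2, -, -⟩ := h2 n i
      have b1' : (P.X n ω i : ℝ) ≤ P.X (n + 1) ω i := by exact_mod_cast b1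
      have b2' : (P.X (n + 1) ω i : ℝ) ≤ P.X n ω i + 2 * P.m := by exact_mod_cast b2
      have hd := h.d_eq n ω i
      rw [← hmdef] at hd b2'
      have x0 := P.x_nonneg n ω i
      have x1 := P.x_le_one h.2 n ω i
      have hD : s' ^ 2 * (P.x (n + 1) ω i - P.x n ω i) ^ 2 ≤ 4 * m ^ 2 := by
        have q1 : s' * (P.x (n + 1) ω i - P.x n ω i) ≤ 2 * m := by nlinarith
        have q2 : -(2 * m) ≤ s' * (P.x (n + 1) ω i - P.x n ω i) := by nlinarith
        have := sq_le_sq' q2 q1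
        nlinarith
      have hz : (P.x n ω i - c) ^ 2 ≤ 1 := by
        have := sq_le_sq' (show -1 ≤ P.x n ω i - c by linarith) (show P.x n ω i - c ≤ 1 by linarith)
        linarith
      have := real_step m K s s' (P.x n ω i - c) (P.x (n + 1) ω i - P.x n ω i) hm hKp hS hSS hD hz
      rw [show P.x n ω i - c + (P.x (n + 1) ω i - P.x n ω i) = P.x (n + 1) ω i - c by ring] at this
      exact this
    rw [int3 (g_int n i f0) j1 j2, h.weight_D n i (g_sm n i f1) (g_int n i f1),
      h.weight_D2 n i (g_sm n i f2) (g_int n i f2), add_zero, ← integral_const_mul,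
      ← integral_add (g_int n i f0) (g_int n i fun y => (P.m ^ 2 + 3 * P.m) / (P.S (n + 1) : ℝ) ^ 2 * (f2 y * (y * (1 - y))))] at a1
    have a2 : e (n + 1) ≤ ∫ ω, (g n (P.x n ω i) - κ / s' * (g n (P.x n ω i)) ^ 2) ∂P.μ := by
      refine a1.trans (integral_mono (g_int n i fun y => f0 y + (P.m ^ 2 + 3 * P.m) / (P.S (n + 1) : ℝ) ^ 2 * (f2 y * (y * (1 - y))))
        (g_int n i fun y => g n y - κ / s' * g n y ^ 2) fun ω => ?_)
      have := real_brk m K s' (P.x n ω i) c κ (1 / (K + s * (P.x n ω i - c) ^ 2) ^ 2) (1 / (K + s * (P.x n ω i - c) ^ 2))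
        hm hK (by linarith) (P.x_nonneg n ω i) (P.x_le_one h.2 n ω i) (min_le_left _ _) (min_le_right _ _) (by positivity)
      simp only [hg]
      rw [one_div_pow]
      exact this
    rw [integral_sub (g_int n i (g n)) (g_int n i fun y => κ / s' * g n y ^ 2), integral_const_mul] at a2
    have a3 : e n ^ 2 ≤ ∫ ω, (g n (P.x n ω i)) ^ 2 ∂P.μ := by
      have p0 : 0 ≤ ∫ ω, (g n (P.x n ω i) - e n) ^ 2 ∂P.μ := integral_nonneg fun ω => sq_nonneg _
      have p1 : ∫ ω, (g n (P.x n ω i) - e n) ^ 2 ∂P.μ = ∫ ω, (g n (P.x n ω i)) ^ 2 ∂P.μ - e n ^ 2 := by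
        have : ∀ ω, (g n (P.x n ω i) - e n) ^ 2 = (g n (P.x n ω i)) ^ 2 + (-(2 * e n)) * g n (P.x n ω i) + e n ^ 2 := fun ω => by ring
        simp_rw [this]
        rw [int3 (g_int n i fun y => g n y ^ 2) (g_int n i fun y => (-(2 * e n)) * g n y) (integrable_const _), integral_const_mul]
        have : ∫ ω, g n (P.x n ω i) ∂P.μ = e n := rfl
        rw [this]; simp; ring
      linarith
    have a4 : (κ / P.S 1) * e n ^ 2 / ((n : ℝ) + 1) ≤ κ / s' * ∫ ω, (g n (P.x n ω i)) ^ 2 ∂P.μ := by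
      have hle := h.S_le n
      have : (κ / P.S 1) * e n ^ 2 / ((n : ℝ) + 1) = κ / (P.S 1 * ((n : ℝ) + 1)) * e n ^ 2 := by field_simp
      rw [this]
      refine mul_le_mul ?_ a3 (sq_nonneg _) (by positivity)
      exact div_le_div_of_nonneg_left hκp.le hS' hle
    have : ∫ ω, g n (P.x n ω i) ∂P.μ = e n := rfl
    linarith
  have hbd : ∀ n, P.μ.real {ω | P.lim ω i = c} ≤ (K + (m + 3) / 2) * e n := by
    intro n
    have hS := h.Spos n
    have hv := h.var_lim n i (w := fun ω => P.S n * g n (P.x n ω i)) (g_sm n i fun z => P.S n * g n z)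
      (g_int n i fun z => P.S n * g n z) (fun ω => mul_nonneg hS.le (hg0 _ _))
    have hwl := h.wlim n i (g_int n i fun z => P.S n * g n z)
    have hms : MeasurableSet {ω | P.lim ω i = c} := (P.lim_sm i).measurable (measurableSet_singleton c)
    have b1 : P.μ.real {ω | P.lim ω i = c} ≤ K * e n + ∫ ω, P.S n * g n (P.x n ω i) * (P.lim ω i - P.x n ω i) ^ 2 ∂P.μ := by
      have : P.μ.real {ω | P.lim ω i = c} = ∫ ω, ({ω | P.lim ω i = c} : Set Ω).indicator (fun _ => (1 : ℝ)) ω ∂P.μ := by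
        rw [integral_indicator_const _ hms]; simp
      rw [this]
      rw [show K * e n = ∫ ω, K * g n (P.x n ω i) ∂P.μ from (integral_const_mul _ _).symm,
        ← integral_add (g_int n i fun z => K * g n z) hwl]
      refine integral_mono ((integrable_const _).indicator hms) ((g_int n i fun z => K * g n z).add hwl) fun ω => ?_
      simp only [Pi.add_apply]
      by_cases hω : P.lim ω i = c
      · rw [Set.indicator_of_mem (show ω ∈ {ω | P.lim ω i = c} from hω), hω]
        simp only [hg]
        have : 0 < K + P.S n * (P.x n ω i - c) ^ 2 := by positivity
        refine le_of_eq ?_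
        field_simp
        ring
      · rw [Set.indicator_of_notMem (show ω ∉ {ω | P.lim ω i = c} from hω)]
        have := hg0 n (P.x n ω i)
        positivity
    have b2 : ∫ ω, P.S n * g n (P.x n ω i) * P.x n ω i ∂P.μ ≤ P.S n * e n := by
      rw [show P.S n * e n = ∫ ω, P.S n * g n (P.x n ω i) ∂P.μ from (integral_const_mul _ _).symm]
      refine integral_mono (g_int n i fun z => P.S n * g n z * z) (g_int n i fun z => P.S n * g n z) fun ω => ?_
      exact mul_le_of_le_one_right (mul_nonneg hS.le (hg0 _ _)) (P.x_le_one h.2 n ω i)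
    have b3 := mul_le_mul_of_nonneg_left b2 (show 0 ≤ (m + 3) / 2 * (1 / P.S n) by positivity)
    have b4 : (m + 3) / 2 * (1 / P.S n) * (P.S n * e n) = (m + 3) / 2 * e n := by field_simp
    rw [b4] at b3
    have := hv.trans b3
    linarith
  have hz : P.μ.real {ω | P.lim ω i = c} ≤ 0 := by
    refine le_of_forall_pos_lt_add fun δ hδ => ?_
    obtain ⟨n, hn⟩ := seq_small e _ (by positivity) he0 hrec (δ / (K + (m + 3) / 2)) (by positivity)
    rw [lt_div_iff₀ (by positivity)] at hn
    have := hbd n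
    linarith
  exact (measureReal_eq_zero_iff).1 (le_antisymm hz measureReal_nonneg)

theorem Lin.no_atom (h : P.Lin) (y : Fin P.N → ℝ) : P.μ {ω | P.lim ω = y} = 0 := by
  by_cases hy : y ∈ stdSimplex ℝ (Fin P.N)
  · have : ∃ j, y j < 1 := by
      by_contra hh
      push Not at hh
      have h1 : ∑ _j : Fin P.N, (1 : ℝ) ≤ ∑ j, y j := Finset.sum_le_sum fun j _ => hh j
      rw [hy.2] at h1
      simp only [Finset.sum_const, Finset.card_univ, Fintype.card_fin, nsmul_eq_mul, mul_one] at h1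
      have h2 : (2 : ℝ) ≤ P.N := by exact_mod_cast P.hN
      linarith
    obtain ⟨j, hj⟩ := this
    have hsub : {ω | P.lim ω = y} ⊆ {ω | P.lim ω j = y j} := fun ω hω => by
      rw [Set.mem_setOf_eq] at hω ⊢; rw [hω]
    refine measure_mono_null hsub ?_
    rcases (hy.1 j).eq_or_lt with h0 | h0
    · rw [← h0]; exact h.atom0 j
    · exact h.atom_c j _ h0 hj
  · refine measure_mono_null ?_ (ae_iff.1 h.lim_mem)
    intro ω hω
    rw [Set.mem_setOf_eq] at hω ⊢; rw [hω]; exact hy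

end NPAProcess

/-- **N-type linear model.** In the `N`-type linear model (`p_u^i = u^i/m` for all `u` and
`i`) with `X_0^i > 0` for all `i`, the process `{a_n}` converges almost surely; moreover the
limiting distribution has full support on the probability simplex `Δ^N` and has no atoms. -/
theorem Ntype_linear_model_convergence_full_support_no_atoms
    {Ω : Type} [MeasurableSpace Ω] (P : NPAProcess Ω)
    (hlin : ∀ u ∈ Finset.Nat.antidiagonalTuple P.N P.m, ∀ i, P.p u i = (u i : ℝ) / P.m)
    (hX0 : ∀ i, 0 < P.X0 i) :
    ∃ L : Ω → (Fin P.N → ℝ),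
      (∀ᵐ ω ∂P.μ, Tendsto (fun n => P.a n ω) atTop (nhds (L ω))) ∧
      (∀ᵐ ω ∂P.μ, L ω ∈ stdSimplex ℝ (Fin P.N)) ∧
      (∀ y ∈ stdSimplex ℝ (Fin P.N), ∀ ε > (0 : ℝ), 0 < P.μ {ω | dist (L ω) y < ε}) ∧
      (∀ y : Fin P.N → ℝ, P.μ {ω | L ω = y} = 0) := by
  have h : P.Lin := ⟨hlin, hX0⟩
  exact ⟨P.lim, h.a_lim, h.lim_mem, fun y hy ε hε => h.support y hy ε hε, fun y => h.no_atom y⟩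
end
end

section
/- Consider the one-step Pólya urn transition adding 2m balls of the drawn color: given a random variable X with values in {X_0, X_0+1, …, S_0 + 2mn} and x = X/(S_0 + 2mn), let X̄ satisfy P(X̄ = X + 2m | X) = x and P(X̄ = X | X) = 1 − x. If X and Y are two such random variables with X ≤_icx Y (X is smaller than Y in the increasing convex order, i.e., E φ(X) ≤ E φ(Y) for all increasing continuous convex φ for which the expectations exist), then X̄ ≤_icx Ȳ. -/
open MeasureTheory ProbabilityTheory Filter Set

noncomputable section

/-- `X` is smaller than `Y` in the increasing convex order: `E φ(X) ≤ E φ(Y)` for every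
increasing continuous convex function `φ : ℝ → ℝ` for which these expectations exist. -/
def IcxLE {Ω₁ Ω₂ : Type} [MeasurableSpace Ω₁] [MeasurableSpace Ω₂]
    (μ₁ : Measure Ω₁) (μ₂ : Measure Ω₂) (X : Ω₁ → ℝ) (Y : Ω₂ → ℝ) : Prop :=
  ∀ φ : ℝ → ℝ, Monotone φ → Continuous φ → ConvexOn ℝ Set.univ φ →
    Integrable (fun ω => φ (X ω)) μ₁ → Integrable (fun ω => φ (Y ω)) μ₂ →
    ∫ ω, φ (X ω) ∂μ₁ ≤ ∫ ω, φ (Y ω) ∂μ₂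

/-- `Xbar` is the result of one Pólya urn transition from `X` adding `2m` balls of the drawn
color, at time `n`, with total `S_0 + 2mn` balls before the step: conditionally on `σ(X)`,
`Xbar = X + 2m` with probability `x = X/(S_0 + 2mn)` and `Xbar = X` with probability
`1 − x`. -/
def IsPolyaStep (m n S₀ : ℕ) {Ω : Type} [MeasurableSpace Ω] (μ : Measure Ω)
    (X Xbar : Ω → ℕ) : Prop :=
  (μ[Set.indicator {ω | Xbar ω = X ω + 2 * m} (fun _ => (1 : ℝ)) |
      MeasurableSpace.comap X inferInstance]
    =ᵐ[μ] fun ω => (X ω : ℝ) / ((S₀ : ℝ) + 2 * m * n)) ∧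
  (μ[Set.indicator {ω | Xbar ω = X ω} (fun _ => (1 : ℝ)) |
      MeasurableSpace.comap X inferInstance]
    =ᵐ[μ] fun ω => 1 - (X ω : ℝ) / ((S₀ : ℝ) + 2 * m * n))

lemma convex_four {f : ℝ → ℝ} (hf : ConvexOn ℝ Set.univ f) (a s t : ℝ) (hs : 0 < s) (ht : 0 < t) :
    f (a + s) + f (a + t) ≤ f a + f (a + s + t) := by
  have hst : 0 < s + t := by linarith
  have h1 := hf.2 (mem_univ a) (mem_univ (a + s + t)) 
    (show 0 ≤ t / (s + t) by positivity) (show 0 ≤ s / (s + t) by positivity)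
    (by field_simp; ring)
  have h2 := hf.2 (mem_univ a) (mem_univ (a + s + t)) 
    (show 0 ≤ s / (s + t) by positivity) (show 0 ≤ t / (s + t) by positivity)
    (by field_simp)
  have e1 : (t / (s + t)) • a + (s / (s + t)) • (a + s + t) = a + s := by
    simp only [smul_eq_mul]; field_simp; ring
  have e2 : (s / (s + t)) • a + (t / (s + t)) • (a + s + t) = a + t := by
    simp only [smul_eq_mul]; field_simp; ring
  rw [e1] at h1
  rw [e2] at h2
  simp only [smul_eq_mul] at h1 h2
  have e3 : t / (s + t) * f a + s / (s + t) * f (a + s + t) +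
      (s / (s + t) * f a + t / (s + t) * f (a + s + t)) = f a + f (a + s + t) := by
    field_simp; ring
  linarith

lemma exists_interp (g : ℕ → ℝ) (h0 : g 0 ≤ g 1) (N : ℕ)
    (hc : ∀ j, j + 1 ≤ N → 0 ≤ g (j + 2) - 2 * g (j + 1) + g j) :
    ∃ ψ : ℝ → ℝ, Monotone ψ ∧ Continuous ψ ∧ ConvexOn ℝ Set.univ ψ ∧
      (∀ k : ℕ, k ≤ N + 1 → ψ k = g k) ∧
      ∀ x : ℝ, (N : ℝ) ≤ x → ψ x = g N + (x - N) * (g (N + 1) - g N) := by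
  induction N with
  | zero =>
    refine ⟨fun x => g 0 + x * (g 1 - g 0), ?_, by fun_prop, ?_, ?_, ?_⟩
    · intro x y hxy
      have := mul_le_mul_of_nonneg_right hxy (sub_nonneg.2 h0)
      simp only; linarith
    · refine ⟨convex_univ, fun x _ y _ a b _ _ hab => le_of_eq ?_⟩
      simp only [smul_eq_mul]
      linear_combination (-g 0) * hab
    · intro k hk
      interval_cases k <;> simp
    · intro x _
      simp
  | succ N ih =>
    obtain ⟨ψ, hm, hcont, hcv, hk, ha⟩ := ih (fun j hj => hc j (by omega))
    set c := g (N + 2) - 2 * g (N + 1) + g N with hcdef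
    have hc0 : 0 ≤ c := hc N le_rfl
    have haff : ∀ x : ℝ, ((N + 1 : ℕ) : ℝ) ≤ x →
        ψ x + c * max (x - (N + 1)) 0 = g (N + 1) + (x - (N + 1 : ℕ)) * (g (N + 1 + 1) - g (N + 1)) := by
      intro x hx
      push_cast at hx
      rw [max_eq_left (by linarith), ha x (by linarith), hcdef]
      push_cast
      ring
    refine ⟨fun x => ψ x + c * max (x - (N + 1)) 0, ?_, by fun_prop, ?_, ?_, haff⟩
    · intro x y hxy
      have := hm hxy
      simp only
      gcongr
    · refine hcv.add ?_
      have : ConvexOn ℝ Set.univ (fun x : ℝ => max (x - (N + 1)) 0) := by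
        refine ConvexOn.sup (f := fun x : ℝ => x - (N + 1)) (g := fun _ => 0) ?_ (convexOn_const _ convex_univ)
        exact (convexOn_id convex_univ).sub (concaveOn_const _ convex_univ)
      exact this.smul hc0
    · intro k hk'
      rcases Nat.lt_or_ge (N + 1) k with h | h
      · have : k = N + 2 := by omega
        subst this
        have := haff ((N + 2 : ℕ) : ℝ) (by push_cast; linarith)
        simp only
        rw [this]
        push_cast
        ring
      · have hk2 : (k : ℝ) ≤ N + 1 := by exact_mod_cast h
        simp only
        rw [max_eq_right (by linarith), hk k h]
        simp

/-- the one-step averaged function -/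
def stepFun (m : ℕ) (T : ℝ) (φ : ℝ → ℝ) (k : ℕ) : ℝ :=
  (k : ℝ) / T * φ ((k + 2 * m : ℕ) : ℝ) + (1 - (k : ℝ) / T) * φ (k : ℝ)

lemma pull_out {Ω : Type} [mΩ : MeasurableSpace Ω] (μ : Measure Ω) [IsProbabilityMeasure μ]
    (X : Ω → ℕ) (hX : Measurable X) (M : ℕ) (hM : ∀ ω, X ω ≤ M) (A : Set Ω) (hA : MeasurableSet A)
    (p : Ω → ℝ) (h : ℕ → ℝ)
    (hp : μ[A.indicator (fun _ => (1 : ℝ)) | MeasurableSpace.comap X inferInstance] =ᵐ[μ] p) :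
    Integrable (fun ω => h (X ω) * A.indicator (fun _ => (1 : ℝ)) ω) μ ∧
    ∫ ω, h (X ω) * A.indicator (fun _ => (1 : ℝ)) ω ∂μ = ∫ ω, h (X ω) * p ω ∂μ := by
  have hle : MeasurableSpace.comap X inferInstance ≤ mΩ := hX.comap_le
  have hh : Measurable[MeasurableSpace.comap X inferInstance] (fun ω => h (X ω)) :=
    (measurable_of_countable h).comp (comap_measurable X)
  have hI : Integrable (A.indicator (fun _ => (1 : ℝ))) μ := (integrable_const 1).indicator hA
  have hint : Integrable (fun ω => h (X ω) * A.indicator (fun _ => (1 : ℝ)) ω) μ := by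
    refine hI.bdd_mul (c := ∑ k ∈ Finset.range (M + 1), |h k|) ?_ ?_
    · exact ((measurable_of_countable h).comp hX).aestronglyMeasurable
    · refine Eventually.of_forall fun ω => ?_
      exact Finset.single_le_sum (f := fun k => |h k|) (fun _ _ => abs_nonneg _)
        (Finset.mem_range.2 (Nat.lt_succ_of_le (hM ω)))
  refine ⟨hint, ?_⟩
  have := condExp_mul_of_stronglyMeasurable_left (μ := μ) hh.stronglyMeasurable hint hI
  rw [← integral_condExp hle]
  refine integral_congr_ae ?_
  filter_upwards [this, hp] with ω h1 h2
  have h1' : (μ[fun ω => h (X ω) * A.indicator (fun _ => (1 : ℝ)) ω | MeasurableSpace.comap X inferInstance]) ω = _ := h1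
  rw [h1', Pi.mul_apply, h2]

lemma step_expect (m n S₀ : ℕ) (hm : 1 ≤ m) {Ω : Type} [MeasurableSpace Ω] (μ : Measure Ω)
    [IsProbabilityMeasure μ] (X Xbar : Ω → ℕ) (hX : Measurable X) (hXb : Measurable Xbar)
    (M : ℕ) (hM : ∀ ω, X ω ≤ M) (hs : IsPolyaStep m n S₀ μ X Xbar) (φ : ℝ → ℝ) :
    ∫ ω, φ (Xbar ω) ∂μ = ∫ ω, stepFun m ((S₀ : ℝ) + 2 * m * n) φ (X ω) ∂μ := by
  obtain ⟨hA, hB⟩ := hs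
  set T : ℝ := (S₀ : ℝ) + 2 * m * n
  set A : Set Ω := {ω | Xbar ω = X ω + 2 * m} with hAdef
  set B : Set Ω := {ω | Xbar ω = X ω} with hBdef
  have mA : MeasurableSet A := measurableSet_eq_fun hXb (hX.add_const _)
  have mB : MeasurableSet B := measurableSet_eq_fun hXb hX
  have ib : ∀ h : ℕ → ℝ, Integrable (fun ω => h (X ω)) μ := fun h => by
    refine Integrable.of_bound ((measurable_of_countable h).comp hX).aestronglyMeasurable
      (∑ k ∈ Finset.range (M + 1), |h k|) (Eventually.of_forall fun ω => ?_)
    exact Finset.single_le_sum (f := fun k => |h k|) (fun _ _ => abs_nonneg _)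
        (Finset.mem_range.2 (Nat.lt_succ_of_le (hM ω)))
  obtain ⟨iA1, eA1⟩ := pull_out μ X hX M hM A mA _ (fun _ => 1) hA
  obtain ⟨iB1, eB1⟩ := pull_out μ X hX M hM B mB _ (fun _ => 1) hB
  obtain ⟨iA, eA⟩ := pull_out μ X hX M hM A mA _ (fun k => φ ((k + 2 * m : ℕ) : ℝ)) hA
  obtain ⟨iB, eB⟩ := pull_out μ X hX M hM B mB _ (fun k => φ (k : ℝ)) hB
  have hAB : ∀ᵐ ω ∂μ, ω ∈ A ∨ ω ∈ B := by
    have hsum : ∫ ω, (1 - (1 * A.indicator (fun _ => (1 : ℝ)) ω + 1 * B.indicator (fun _ => (1 : ℝ)) ω)) ∂μ = 0 := by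
      have iAB : Integrable (fun ω => 1 * A.indicator (fun _ => (1 : ℝ)) ω
          + 1 * B.indicator (fun _ => (1 : ℝ)) ω) μ := iA1.add iB1
      rw [integral_sub (integrable_const _) iAB, integral_add iA1 iB1, eA1, eB1,
        ← integral_add (ib fun k => 1 * ((k : ℝ) / T)) (ib fun k => 1 * (1 - (k : ℝ) / T))]
      simp
    have hdis : ∀ ω, ω ∈ A → ω ∉ B := by
      intro ω h1 h2
      simp only [hAdef, hBdef, mem_ofPred_eq] at h1 h2
      omega
    rw [integral_eq_zero_iff_of_nonneg] at hsum
    · filter_upwards [hsum] with ω hω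
      by_contra hcon
      push Not at hcon
      simp [hcon.1, hcon.2] at hω
    · intro ω
      by_cases h1 : ω ∈ A
      · simp [h1, hdis ω h1]
      · by_cases h2 : ω ∈ B <;> simp [h1, h2]
    · exact (integrable_const _).sub (iA1.add iB1)
  have e1 : ∫ ω, φ (Xbar ω) ∂μ = ∫ ω, (φ ((X ω + 2 * m : ℕ) : ℝ) * A.indicator (fun _ => (1 : ℝ)) ω
      + φ (X ω : ℝ) * B.indicator (fun _ => (1 : ℝ)) ω) ∂μ := by
    refine integral_congr_ae ?_
    filter_upwards [hAB] with ω hω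
    rcases hω with h | h
    · have h2 : ω ∉ B := by
        intro h2
        simp only [hAdef, hBdef, mem_ofPred_eq] at h h2
        omega
      have h' : Xbar ω = X ω + 2 * m := h
      simp [h, h2, h']
    · have h2 : ω ∉ A := by
        intro h2
        simp only [hAdef, hBdef, mem_ofPred_eq] at h h2
        omega
      have h' : Xbar ω = X ω := h
      simp [h, h2, h']
  rw [e1, integral_add iA iB, eA, eB,
    ← integral_add (ib fun k => φ ((k + 2 * m : ℕ) : ℝ) * ((k : ℝ) / T)) (ib fun k => φ (k : ℝ) * (1 - (k : ℝ) / T))]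
  congr 1
  ext ω
  unfold stepFun
  ring

lemma stepFun_convex (m : ℕ) (hm : 1 ≤ m) (T : ℝ) (hT : 0 < T) (φ : ℝ → ℝ)
    (hφ : ConvexOn ℝ Set.univ φ) (j : ℕ) (hj : (j : ℝ) + 1 ≤ T) :
    0 ≤ stepFun m T φ (j + 2) - 2 * stepFun m T φ (j + 1) + stepFun m T φ j := by
  have hm' : (0 : ℝ) < 2 * m := by positivity
  have a1 := convex_four hφ j 1 1 one_pos one_pos
  have a2 := convex_four hφ (j + 2 * m) 1 1 one_pos one_pos
  have a3 := convex_four hφ j 2 (2 * m) two_pos hm'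
  have r1 : (j : ℝ) + 1 + 1 = j + 2 := by ring
  have r2 : (j : ℝ) + 2 * m + 1 + 1 = j + 2 + 2 * m := by ring
  have r3 : (j : ℝ) + 2 * m + 1 = j + 1 + 2 * m := by ring
  rw [r1] at a1
  rw [r2, r3] at a2
  have x0 : 0 ≤ ((j : ℝ) + 1) / T := by positivity
  have x1 : ((j : ℝ) + 1) / T ≤ 1 := (div_le_one hT).2 hj
  have x2 : 0 ≤ 1 / T := by positivity
  have p1 := mul_nonneg (sub_nonneg.2 x1) (sub_nonneg.2 a1)
  have p2 := mul_nonneg x0 (sub_nonneg.2 a2)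
  have p3 := mul_nonneg x2 (sub_nonneg.2 a3)
  unfold stepFun
  push_cast
  refine (add_nonneg (add_nonneg p1 p2) p3).trans (le_of_eq ?_)
  ring

/-- **Pólya urn transitions preserve the increasing convex order.** Let `X` and `Y` be
random variables with values in `{X_0, …, S_0 + 2mn}` and let `X̄`, `Ȳ` be obtained from
them by one Pólya urn transition adding `2m` balls of the drawn color.  If `X ≤_icx Y` then
`X̄ ≤_icx Ȳ`. -/
theorem polya_step_preserves_icx
    (m n X₀ S₀ : ℕ) (hm : 1 ≤ m) (hX₀ : 0 < X₀) (hS₀ : X₀ ≤ S₀)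
    {Ω₁ Ω₂ : Type} [MeasurableSpace Ω₁] [MeasurableSpace Ω₂]
    (μ₁ : Measure Ω₁) (μ₂ : Measure Ω₂)
    [IsProbabilityMeasure μ₁] [IsProbabilityMeasure μ₂]
    (X Xbar : Ω₁ → ℕ) (Y Ybar : Ω₂ → ℕ)
    (hXmeas : Measurable X) (hYmeas : Measurable Y)
    (hXbarmeas : Measurable Xbar) (hYbarmeas : Measurable Ybar)
    (hXrange : ∀ ω, X ω ∈ Set.Icc X₀ (S₀ + 2 * m * n))
    (hYrange : ∀ ω, Y ω ∈ Set.Icc X₀ (S₀ + 2 * m * n))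
    (hXstep : IsPolyaStep m n S₀ μ₁ X Xbar)
    (hYstep : IsPolyaStep m n S₀ μ₂ Y Ybar)
    (hicx : IcxLE μ₁ μ₂ (fun ω => (X ω : ℝ)) (fun ω => (Y ω : ℝ))) :
    IcxLE μ₁ μ₂ (fun ω => (Xbar ω : ℝ)) (fun ω => (Ybar ω : ℝ)) := by
  intro φ hmono hcont hconv _ _
  have hM : 0 < S₀ + 2 * m * n := by omega
  have hT : (0 : ℝ) < (S₀ : ℝ) + 2 * m * n := by exact_mod_cast hM
  rw [step_expect m n S₀ hm μ₁ X Xbar hXmeas hXbarmeas _ (fun ω => (hXrange ω).2) hXstep φ,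
    step_expect m n S₀ hm μ₂ Y Ybar hYmeas hYbarmeas _ (fun ω => (hYrange ω).2) hYstep φ]
  obtain ⟨N, hN⟩ : ∃ N, S₀ + 2 * m * n = N + 1 := ⟨S₀ + 2 * m * n - 1, by omega⟩
  have hNT : (S₀ : ℝ) + 2 * m * n = N + 1 := by exact_mod_cast hN
  obtain ⟨ψ, h1, h2, h3, h4, -⟩ := exists_interp (stepFun m ((S₀ : ℝ) + 2 * m * n) φ) (by
      have b1 : φ 0 ≤ φ 1 := hmono zero_le_one
      have b2 : φ 1 ≤ φ (1 + 2 * m) := hmono (by linarith [(Nat.cast_nonneg m : (0 : ℝ) ≤ m)])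
      have b3 := mul_nonneg (one_div_pos.2 hT).le (sub_nonneg.2 b2)
      unfold stepFun
      push_cast
      simp only [zero_div, zero_mul, sub_zero, one_mul, zero_add]
      linarith) N (fun j hj => stepFun_convex m hm _ hT φ hconv j (by
        rw [hNT]
        have : ((j + 1 : ℕ) : ℝ) ≤ N := by exact_mod_cast hj
        push_cast at this
        linarith))
  have eX : ∀ ω, stepFun m ((S₀ : ℝ) + 2 * m * n) φ (X ω) = ψ (X ω) := fun ω =>
    (h4 _ (hN ▸ (hXrange ω).2)).symm
  have eY : ∀ ω, stepFun m ((S₀ : ℝ) + 2 * m * n) φ (Y ω) = ψ (Y ω) := fun ω =>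
    (h4 _ (hN ▸ (hYrange ω).2)).symm
  simp only [eX, eY]
  refine hicx ψ h1 h2 h3 ?_ ?_
  · refine Integrable.of_bound ((measurable_of_countable fun k : ℕ => ψ k).comp hXmeas).aestronglyMeasurable
      (∑ k ∈ Finset.range (N + 1 + 1), |ψ (k : ℕ)|) (Eventually.of_forall fun ω => ?_)
    exact Finset.single_le_sum (f := fun k : ℕ => |ψ k|) (fun _ _ => abs_nonneg _)
        (Finset.mem_range.2 (Nat.lt_succ_of_le (hN ▸ (hXrange ω).2)))
  · refine Integrable.of_bound ((measurable_of_countable fun k : ℕ => ψ k).comp hYmeas).aestronglyMeasurable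
      (∑ k ∈ Finset.range (N + 1 + 1), |ψ (k : ℕ)|) (Eventually.of_forall fun ω => ?_)
    exact Finset.single_le_sum (f := fun k : ℕ => |ψ k|) (fun _ _ => abs_nonneg _)
        (Finset.mem_range.2 (Nat.lt_succ_of_le (hN ▸ (hYrange ω).2)))
end
end
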